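/- Let $T_1,\dots,T_l$ be commuting invertible ergodic measure preserving transformations of a probability space $(X,\mathcal{X},\mu)$ with $T_iT_j^{-1}$ ergodic for all $i\neq j$. If $\mathbb{E}(f_i|\mathcal{Z}_{l-1})=0$ for some $i\in\{1,\dots,l\}$, then $\frac{1}{N}\sum_{n=0}^{N-1}\prod_{j=1}^l f_j\circ T_j^n \to 0$ in $L^2(\mu)$; i.e., $\mathcal{Z}_{l-1}$ is a characteristic factor for these averages. -/

import Mathlib

open MeasureTheory Filter Finset

/-- The spaces `X^{[k]} = X^{2^k}`, realized as iterated squares. -/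
def HKBox (X : Type*) : ℕ → Type _
  | 0 => X
  | (k+1) => HKBox X k × HKBox X k

def HKBox.instMS (X : Type*) [m : MeasurableSpace X] : ∀ k, MeasurableSpace (HKBox X k)
  | 0 => m
  | (k+1) => @Prod.instMeasurableSpace _ _ (HKBox.instMS X k) (HKBox.instMS X k)

instance (X : Type*) [MeasurableSpace X] (k : ℕ) : MeasurableSpace (HKBox X k) :=
  HKBox.instMS X k

/-- The diagonal transformation `T^{[k]} = T × ⋯ × T` on `X^{[k]}`. -/
def HKBox.map {X : Type*} (T : X → X) : ∀ k, HKBox X k → HKBox X k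
  | 0 => T
  | (k+1) => fun p => (HKBox.map T k p.1, HKBox.map T k p.2)

/-- The σ-algebra of invariant sets of a transformation. -/
def invSigma {α : Type*} [m : MeasurableSpace α] (f : α → α) : MeasurableSpace α where
  MeasurableSet' s := MeasurableSet s ∧ f ⁻¹' s = s
  measurableSet_empty := ⟨MeasurableSet.empty, rfl⟩
  measurableSet_compl := fun s hs => ⟨hs.1.compl, by rw [Set.preimage_compl, hs.2]⟩
  measurableSet_iUnion := fun s hs => ⟨MeasurableSet.iUnion fun i => (hs i).1, by
    rw [Set.preimage_iUnion]; exact Set.iUnion_congr fun i => (hs i).2⟩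

/-- The product of `f` over all `2^k` coordinates of `X^{[k]}`. -/
def HKBox.prodFun {X : Type*} (f : X → ℝ) : ∀ k, HKBox X k → ℝ
  | 0 => f
  | (k+1) => fun p => HKBox.prodFun f k p.1 * HKBox.prodFun f k p.2

/-- `IsHKSeq μ T ν` asserts that `ν k` is the Host–Kra box measure `μ^{[k]}` of the
system `(X, μ, T)`: `ν 0 = μ` and `ν (k+1)` is the relatively independent square of
`ν k` over the σ-algebra of `T^{[k]}`-invariant sets. -/
def IsHKSeq {X : Type*} [MeasurableSpace X] (μ : Measure X) (T : X → X)
    (ν : ∀ k, Measure (HKBox X k)) : Prop :=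
  ν 0 = μ ∧ ∀ k, (∀ F' F'' : HKBox X k → ℝ, Measurable F' → Measurable F'' →
    (∃ C, ∀ x, |F' x| ≤ C) → (∃ C, ∀ x, |F'' x| ≤ C) →
    ∫ p, F' p.1 * F'' p.2 ∂(ν (k+1)) =
      ∫ x, ((ν k)[F' | invSigma (HKBox.map T k)]) x *
        ((ν k)[F'' | invSigma (HKBox.map T k)]) x ∂(ν k))

/-- The `k`-th Host–Kra seminorm of `f`, computed from a sequence `ν` of box measures:
`⦀f⦀_k = (∫ ∏_{ε} f(x_ε) dν k)^{1/2^k}`. -/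
noncomputable def HKseminorm {X : Type*} [MeasurableSpace X]
    (ν : ∀ k, Measure (HKBox X k)) (k : ℕ) (f : X → ℝ) : ℝ :=
  (∫ x, HKBox.prodFun f k x ∂(ν k)) ^ (((2 : ℝ) ^ k)⁻¹)

/-! Van der Corput's inequality bounds the `L²` norm of a multiple average by correlations of
its summands. The change of variables `x ↦ T_p^(-n) x` turns these correlations into multiple
averages of the transformations `T_j T_p⁻¹`, `j ≠ p`, in which `f_i` is replaced by
`f_i ∘ T_i^a * f_i ∘ T_i^b`, and the `k`-th box integrals of these products average over `a` and
`b` to the `(k+1)`-st box integral of `f_i`. The induction closes because the box measures of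
`T_i` and of `T_i T_p⁻¹` coincide.

Let `lam1` be the relatively independent square of `lam` over the `R`-invariant sets. The form
`⟨𝔼(a ⊗ b | I), 𝔼(c ⊗ d | I)⟩`, with `I` the `R × R`-invariant sets, is symmetric in `b` and `c`:
the defect is a positive semidefinite kernel in the pairs `(a, b)` and `(c, d)`, it vanishes at
`(a, a), (b, b)`, and a positive semidefinite kernel vanishes wherever its diagonal does. If `lam1`
is also the square for a commuting `S`, then `id × S` preserves `lam1`, and the symmetry
carries this invariance over to `S × S` acting on the `R × R`-invariant functions. Hence `R × R` and
`S × S` have the same invariant functions and the same relatively independent square. -/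

section Averages

/-- The average of `c i j` over `0 ≤ i, j < H`. -/
noncomputable def doubleAverage (H : ℕ) (c : ℕ → ℕ → ℝ) : ℝ :=
  ((H : ℝ)⁻¹) ^ 2 * ∑ i ∈ range H, ∑ j ∈ range H, c i j

theorem doubleAverage_add_const {H : ℕ} (hH : H ≠ 0) (c : ℕ → ℕ → ℝ) (ε : ℝ) :
    doubleAverage H (fun i j => c i j + ε) = doubleAverage H c + ε := by
  simp only [doubleAverage, sum_add_distrib, sum_const, card_range, nsmul_eq_mul]
  field_simp

theorem pow_doubleAverage_le {m : ℕ} (hm : Even m) {H : ℕ} (hH : H ≠ 0) (c : ℕ → ℕ → ℝ) :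
    doubleAverage H c ^ m ≤ doubleAverage H (fun i j => c i j ^ m) := by
  have hweight : ∑ _p ∈ range H ×ˢ range H, ((H : ℝ)⁻¹) ^ 2 = 1 := by
    rw [sum_const, card_product, card_range, nsmul_eq_mul, Nat.cast_mul]
    field_simp
  have hJensen := Real.pow_arith_mean_le_arith_mean_pow_of_even (range H ×ˢ range H)
    (fun _ => ((H : ℝ)⁻¹) ^ 2) (fun p => c p.1 p.2) (fun _ _ => sq_nonneg _) hweight hm
  simpa only [doubleAverage, ← mul_sum, sum_product] using hJensen

theorem eventually_pow_doubleAverage_le {b : ℕ → ℕ → ℕ → ℝ} {c : ℕ → ℕ → ℝ} {m : ℕ} (hm : Even m)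
    (hb : ∀ i j, ∀ ε > 0, ∀ᶠ N in atTop, b N i j ^ m ≤ c i j + ε) {H : ℕ} (hH : H ≠ 0) {ε : ℝ}
    (hε : 0 < ε) : ∀ᶠ N in atTop, doubleAverage H (b N) ^ m ≤ doubleAverage H c + ε := by
  have hall : ∀ᶠ N in atTop, ∀ i ∈ range H, ∀ j ∈ range H, b N i j ^ m ≤ c i j + ε := by
    simp only [Filter.eventually_all_finset]
    exact fun i _ j _ => hb i j ε hε
  filter_upwards [hall] with N hN
  rw [← doubleAverage_add_const hH]
  refine (pow_doubleAverage_le hm hH (b N)).trans ?_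
  exact mul_le_mul_of_nonneg_left (sum_le_sum fun i hi => sum_le_sum fun j hj => hN i hi j hj)
    (sq_nonneg _)

theorem eventually_pow_le_of_le_doubleAverage {a : ℕ → ℝ} {b : ℕ → ℕ → ℕ → ℝ} {c : ℕ → ℕ → ℝ}
    {L : ℝ} {m : ℕ} (hm : Even m) (hm₀ : m ≠ 0) (ha : ∀ N, 0 ≤ a N) (hL : 0 ≤ L)
    (hab : ∀ H ≠ 0, ∀ N : ℕ, a N ≤ doubleAverage H (b N) + 4 * H / N)
    (hb : ∀ i j, ∀ ε > 0, ∀ᶠ N in atTop, b N i j ^ m ≤ c i j + ε)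
    (hc : Tendsto (fun H => doubleAverage H c) atTop (nhds L)) {ε : ℝ} (hε : 0 < ε) :
    ∀ᶠ N in atTop, a N ^ m ≤ L + ε := by
  obtain ⟨H, hH, hcH⟩ : ∃ H ≠ 0, doubleAverage H c < L + ε / 3 :=
    ((eventually_ne_atTop 0).and (hc.eventually_lt_const (by linarith))).exists
  obtain ⟨r, hr₀, hr⟩ : ∃ r, 0 ≤ r ∧ r ^ m = L + 2 * ε / 3 :=
    ⟨(L + 2 * ε / 3) ^ (m : ℝ)⁻¹, by positivity, Real.rpow_inv_natCast_pow (by positivity) hm₀⟩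
  have hlim : Tendsto (fun N : ℕ => (r + 4 * H / N) ^ m) atTop (nhds (r ^ m)) := by
    simpa only [add_zero] using
      ((tendsto_const_div_atTop_nhds_zero_nat (4 * (H : ℝ))).const_add r).pow m
  filter_upwards [eventually_pow_doubleAverage_le hm hb hH (show 0 < ε / 3 by positivity),
    hlim.eventually_le_const (show r ^ m < L + ε by linarith)] with N hbN hN
  have hbr : doubleAverage H (b N) ≤ r := le_of_pow_le_pow_left₀ hm₀ hr₀ (by linarith)
  exact (pow_le_pow_left₀ (ha N) ((hab H hH N).trans (by gcongr)) m).trans hN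

end Averages

section VanDerCorput

variable {E : Type*} [NormedAddCommGroup E]

theorem norm_sum_range_add_sub_le {u : ℕ → E} (hu : ∀ k, ‖u k‖ ≤ 1) (N h : ℕ) :
    ‖∑ k ∈ range N, u (k + h) - ∑ k ∈ range N, u k‖ ≤ 2 * h := by
  have hsum : ∀ v : ℕ → E, (∀ k, ‖v k‖ ≤ 1) → ‖∑ k ∈ range h, v k‖ ≤ h := fun v hv => by
    simpa only [sum_const, card_range, nsmul_eq_mul, mul_one] using
      norm_sum_le_of_le (range h) fun k _ => hv k
  have hshift : ∑ k ∈ range N, u (k + h) - ∑ k ∈ range N, u k =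
      ∑ k ∈ range h, u (N + k) - ∑ k ∈ range h, u k := by
    have hN := sum_range_add u h N
    rw [add_comm h N, sum_range_add] at hN
    simp only [add_comm _ h]
    rw [sub_eq_sub_iff_add_eq_add, add_comm, ← hN, add_comm]
  rw [hshift]
  linarith [norm_sub_le (∑ k ∈ range h, u (N + k)) (∑ k ∈ range h, u k),
    hsum _ fun k => hu (N + k), hsum u hu]

section NormedSpace

variable [NormedSpace ℝ E]

theorem norm_average_le {v : ℕ → E} {c : ℝ} (hc : 0 ≤ c) {N : ℕ} (hv : ∀ k < N, ‖v k‖ ≤ c) :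
    ‖(N : ℝ)⁻¹ • ∑ k ∈ range N, v k‖ ≤ c := by
  have hsum := norm_sum_le_of_le (range N) fun k hk => hv k (mem_range.1 hk)
  rw [sum_const, card_range, nsmul_eq_mul] at hsum
  rw [norm_smul, norm_inv, RCLike.norm_natCast]
  rcases eq_or_ne N 0 with rfl | hN
  · simpa using hc
  · rwa [inv_mul_le_iff₀ (by positivity)]

theorem norm_sq_average_le (w : ℕ → E) (N : ℕ) :
    ‖(N : ℝ)⁻¹ • ∑ k ∈ range N, w k‖ ^ 2 ≤ (N : ℝ)⁻¹ * ∑ k ∈ range N, ‖w k‖ ^ 2 := by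
  have hsq : (∑ k ∈ range N, ‖w k‖) ^ 2 ≤ N * ∑ k ∈ range N, ‖w k‖ ^ 2 := by
    simpa only [card_range] using sq_sum_le_card_mul_sum_sq (s := range N) (f := fun k => ‖w k‖)
  rw [norm_smul, norm_inv, RCLike.norm_natCast, mul_pow]
  calc ((N : ℝ)⁻¹) ^ 2 * ‖∑ k ∈ range N, w k‖ ^ 2
      ≤ ((N : ℝ)⁻¹) ^ 2 * (N * ∑ k ∈ range N, ‖w k‖ ^ 2) := by
        gcongr
        exact (pow_le_pow_left₀ (norm_nonneg _) (norm_sum_le _ _) 2).trans hsq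
    _ = (N : ℝ)⁻¹ * ∑ k ∈ range N, ‖w k‖ ^ 2 := by
        rcases eq_or_ne N 0 with rfl | hN
        · simp only [range_zero, sum_empty, mul_zero]
        · field_simp

theorem norm_average_sub_average_average_le {u : ℕ → E} (hu : ∀ k, ‖u k‖ ≤ 1) {H : ℕ} (hH : H ≠ 0)
    (N : ℕ) :
    ‖(N : ℝ)⁻¹ • ∑ k ∈ range N, u k -
      (N : ℝ)⁻¹ • ∑ k ∈ range N, (H : ℝ)⁻¹ • ∑ a ∈ range H, u (k + a)‖ ≤ 2 * H / N := by
  have hdiff : (N : ℝ)⁻¹ • ∑ k ∈ range N, u k -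
      (N : ℝ)⁻¹ • ∑ k ∈ range N, (H : ℝ)⁻¹ • ∑ a ∈ range H, u (k + a) =
      (H : ℝ)⁻¹ • ∑ a ∈ range H, -(N : ℝ)⁻¹ •
        (∑ k ∈ range N, u (k + a) - ∑ k ∈ range N, u k) := by
    have hH' : (H : ℝ) ≠ 0 := Nat.cast_ne_zero.2 hH
    rw [← smul_sum, ← smul_sum, sum_sub_distrib, sum_const, card_range, sum_comm, smul_sub,
      smul_sub, smul_comm (H : ℝ)⁻¹, smul_comm (H : ℝ)⁻¹, ← Nat.cast_smul_eq_nsmul ℝ,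
      inv_smul_smul₀ hH', neg_smul, neg_smul]
    abel
  rw [hdiff]
  refine norm_average_le (by positivity) fun a ha => ?_
  rw [norm_smul, norm_neg, norm_inv, RCLike.norm_natCast, ← div_eq_inv_mul]
  gcongr
  refine (norm_sum_range_add_sub_le hu N a).trans ?_
  gcongr

end NormedSpace

variable [InnerProductSpace ℝ E]

theorem norm_sq_average_eq_doubleAverage (v : ℕ → E) (H : ℕ) :
    ‖(H : ℝ)⁻¹ • ∑ a ∈ range H, v a‖ ^ 2 = doubleAverage H fun a b => inner ℝ (v a) (v b) := by
  rw [norm_smul, mul_pow, norm_inv, RCLike.norm_natCast, ← real_inner_self_eq_norm_sq, sum_inner]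
  simp only [inner_sum, doubleAverage]

theorem norm_sq_average_le_doubleAverage {u : ℕ → E} (hu : ∀ k, ‖u k‖ ≤ 1) {H : ℕ} (hH : H ≠ 0)
    (N : ℕ) :
    ‖(N : ℝ)⁻¹ • ∑ k ∈ range N, u k‖ ^ 2 ≤
      doubleAverage H (fun a b => (N : ℝ)⁻¹ * ∑ k ∈ range N, inner ℝ (u (k + a)) (u (k + b))) +
        4 * H / N := by
  set w : ℕ → E := fun k => (H : ℝ)⁻¹ • ∑ a ∈ range H, u (k + a)
  have hu_avg : ‖(N : ℝ)⁻¹ • ∑ k ∈ range N, u k‖ ≤ 1 := norm_average_le zero_le_one fun k _ => hu k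
  have hw_avg : ‖(N : ℝ)⁻¹ • ∑ k ∈ range N, w k‖ ≤ 1 :=
    norm_average_le zero_le_one fun k _ => norm_average_le zero_le_one fun a _ => hu (k + a)
  have hclose := (norm_sub_norm_le _ _).trans (norm_average_sub_average_average_le hu hH N)
  have hcorrelation : (N : ℝ)⁻¹ * ∑ k ∈ range N, ‖w k‖ ^ 2 =
      doubleAverage H fun a b => (N : ℝ)⁻¹ * ∑ k ∈ range N, inner ℝ (u (k + a)) (u (k + b)) := by
    simp only [w, norm_sq_average_eq_doubleAverage, doubleAverage, ← mul_sum]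
    rw [mul_left_comm, sum_comm]
    simp only [sum_comm (s := range N)]
  have hsq := norm_sq_average_le w N
  rw [hcorrelation] at hsq
  have herror : (4 * H / N : ℝ) = 2 * (2 * H / N) := by ring
  have hpos : (0 : ℝ) ≤ 2 * H / N := by positivity
  nlinarith [norm_nonneg ((N : ℝ)⁻¹ • ∑ k ∈ range N, u k),
    norm_nonneg ((N : ℝ)⁻¹ • ∑ k ∈ range N, w k)]

end VanDerCorput

section BoundedFunctions

/-- Bounded measurable real functions: the class of functions against which box measures and
multiple averages are tested. -/
def BddMeasurable {Y : Type*} [MeasurableSpace Y] (F : Y → ℝ) : Prop :=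
  Measurable F ∧ ∃ C, ∀ x, |F x| ≤ C

namespace BddMeasurable

variable {Y Z ι : Type*} [MeasurableSpace Y] [MeasurableSpace Z] {F G : Y → ℝ}

theorem const (c : ℝ) : BddMeasurable (fun _ : Y => c) :=
  ⟨measurable_const, |c|, fun _ => le_rfl⟩

theorem mul (hF : BddMeasurable F) (hG : BddMeasurable G) : BddMeasurable (fun x => F x * G x) := by
  obtain ⟨hF, C, hC⟩ := hF
  obtain ⟨hG, D, hD⟩ := hG
  refine ⟨hF.mul hG, C * D, fun x => ?_⟩
  rw [abs_mul]
  exact mul_le_mul (hC x) (hD x) (abs_nonneg _) ((abs_nonneg _).trans (hC x))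

theorem add (hF : BddMeasurable F) (hG : BddMeasurable G) : BddMeasurable (fun x => F x + G x) := by
  obtain ⟨hF, C, hC⟩ := hF
  obtain ⟨hG, D, hD⟩ := hG
  exact ⟨hF.add hG, C + D, fun x => (abs_add_le _ _).trans (add_le_add (hC x) (hD x))⟩

theorem const_mul (hF : BddMeasurable F) (c : ℝ) : BddMeasurable (fun x => c * F x) :=
  (const c).mul hF

theorem comp (hF : BddMeasurable F) {g : Z → Y} (hg : Measurable g) :
    BddMeasurable (fun x => F (g x)) :=
  ⟨hF.1.comp hg, hF.2.choose, fun _ => hF.2.choose_spec _⟩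

theorem sum (s : Finset ι) {F : ι → Y → ℝ} (hF : ∀ i, BddMeasurable (F i)) :
    BddMeasurable (fun x => ∑ i ∈ s, F i x) := by
  classical
  induction s using Finset.induction_on with
  | empty => simpa only [Finset.sum_empty] using const 0
  | insert a s ha ih => simpa only [Finset.sum_insert ha] using (hF a).add ih

theorem prod (s : Finset ι) {F : ι → Y → ℝ} (hF : ∀ i, BddMeasurable (F i)) :
    BddMeasurable (fun x => ∏ i ∈ s, F i x) := by
  classical
  induction s using Finset.induction_on with
  | empty => simpa only [Finset.prod_empty] using const 1
  | insert a s ha ih => simpa only [Finset.prod_insert ha] using (hF a).mul ih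

theorem indicator_one {s : Set Y} (hs : MeasurableSet s) :
    BddMeasurable (s.indicator (fun _ => (1 : ℝ))) := by
  refine ⟨measurable_const.indicator hs, 1, fun x => ?_⟩
  by_cases h : x ∈ s <;> simp [h]

theorem average {F : ℕ → Y → ℝ} (hF : ∀ n, BddMeasurable (F n)) (N : ℕ) :
    BddMeasurable (fun x => (N : ℝ)⁻¹ * ∑ n ∈ range N, F n x) :=
  (sum (range N) hF).const_mul _

theorem birkhoffAverage (hF : BddMeasurable F) {R : Y → Y} (hR : Measurable R) (N : ℕ) :
    BddMeasurable (birkhoffAverage ℝ R F N) :=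
  average (fun n => hF.comp (hR.iterate n)) N

variable (lam : Measure Y) [IsFiniteMeasure lam]

theorem memLp (hF : BddMeasurable F) (p : ENNReal) : MemLp F p lam := by
  obtain ⟨h, C, hC⟩ := hF
  exact MemLp.of_bound h.aestronglyMeasurable C (Eventually.of_forall hC)

theorem integrable (hF : BddMeasurable F) : Integrable F lam :=
  memLp_one_iff_integrable.1 (hF.memLp lam 1)

/-- The class in `L²(lam)` of a bounded measurable function. -/
noncomputable def toL2 (hF : BddMeasurable F) : Lp ℝ 2 lam :=
  (hF.memLp lam 2).toLp F

theorem inner_toL2 (hF : BddMeasurable F) (hG : BddMeasurable G) :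
    inner ℝ (hF.toL2 lam) (hG.toL2 lam) = ∫ x, F x * G x ∂lam := by
  rw [L2.inner_def]
  apply integral_congr_ae
  filter_upwards [(hF.memLp lam 2).coeFn_toLp, (hG.memLp lam 2).coeFn_toLp] with x hFx hGx
  rw [toL2, toL2, hFx, hGx, RCLike.inner_apply, RCLike.conj_to_real, mul_comm]

theorem norm_sq_toL2 (hF : BddMeasurable F) : ‖hF.toL2 lam‖ ^ 2 = ∫ x, F x ^ 2 ∂lam := by
  rw [← real_inner_self_eq_norm_sq, inner_toL2]
  simp only [sq]

theorem toL2_average {F : ℕ → Y → ℝ} (hF : ∀ n, BddMeasurable (F n)) (N : ℕ) :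
    (average hF N).toL2 lam = (N : ℝ)⁻¹ • ∑ n ∈ range N, (hF n).toL2 lam := by
  have toL2_sum : ∀ M, (sum (range M) hF).toL2 lam = ∑ n ∈ range M, (hF n).toL2 lam := by
    intro M
    induction M with
    | zero => simp only [range_zero, Finset.sum_empty]; exact MemLp.toLp_zero _
    | succ M ih =>
      simp only [Finset.sum_range_succ, ← ih]
      exact MemLp.toLp_add ((sum (range M) hF).memLp lam 2) ((hF M).memLp lam 2)
  rw [← toL2_sum]
  exact MemLp.toLp_const_smul (N : ℝ)⁻¹ ((sum (range N) hF).memLp lam 2)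

theorem integral_average {F : ℕ → Y → ℝ} (hF : ∀ n, BddMeasurable (F n)) (N : ℕ) :
    ∫ x, (N : ℝ)⁻¹ * ∑ n ∈ range N, F n x ∂lam = (N : ℝ)⁻¹ * ∑ n ∈ range N, ∫ x, F n x ∂lam := by
  rw [integral_const_mul, integral_finsetSum _ fun n _ => (hF n).integrable lam]

theorem integral_sq_average {F : ℕ → Y → ℝ} (hF : ∀ n, BddMeasurable (F n)) (N : ℕ) :
    ∫ x, ((N : ℝ)⁻¹ * ∑ n ∈ range N, F n x) ^ 2 ∂lam =
      doubleAverage N fun i j => ∫ x, F i x * F j x ∂lam := by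
  rw [← norm_sq_toL2 lam (average hF N), toL2_average lam hF,
    norm_sq_average_eq_doubleAverage]
  simp only [inner_toL2]

theorem eLpNorm_two (hF : BddMeasurable F) :
    eLpNorm F 2 lam = ENNReal.ofReal √(∫ x, F x ^ 2 ∂lam) := by
  rw [← hF.norm_sq_toL2 lam, Real.sqrt_sq (norm_nonneg _), toL2, Lp.norm_toLp,
    ENNReal.ofReal_toReal (hF.memLp lam 2).eLpNorm_ne_top]

theorem sq_integral_mul_le (hF : BddMeasurable F) (hG : BddMeasurable G) :
    (∫ x, F x * G x ∂lam) ^ 2 ≤ (∫ x, F x ^ 2 ∂lam) * ∫ x, G x ^ 2 ∂lam := by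
  rw [← inner_toL2 lam hF hG, ← norm_sq_toL2 lam hF, ← norm_sq_toL2 lam hG, ← mul_pow, sq_le_sq,
    abs_mul, abs_norm, abs_norm]
  exact abs_real_inner_le_norm _ _

end BddMeasurable

end BoundedFunctions

section InvariantConditionalExpectation

variable {Y : Type*} [mY : MeasurableSpace Y] {lam : Measure Y} {R S : Y → Y}

theorem invSigma_le (R : Y → Y) : invSigma R ≤ mY :=
  fun _ hs => hs.1

theorem comp_eq_of_measurable_invSigma {g : Y → ℝ} (hg : Measurable[invSigma R] g) :
    g ∘ R = g :=
  MeasurableSpace.comp_eq_of_measurable_invariants hg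

theorem ae_comp_eq_of_aestronglyMeasurable_invSigma (hR : Measure.QuasiMeasurePreserving R lam lam)
    {g : Y → ℝ} (hg : AEStronglyMeasurable[invSigma R] g lam) : g ∘ R =ᵐ[lam] g := by
  obtain ⟨g', hg', hgg'⟩ := hg
  calc g ∘ R =ᵐ[lam] g' ∘ R := hR.ae_eq_comp hgg'
    _ = g' := comp_eq_of_measurable_invSigma hg'.measurable
    _ =ᵐ[lam] g := hgg'.symm

/-- The `limsup` along orbits is a strictly invariant version of `g`. -/
theorem aestronglyMeasurable_invSigma_of_ae_comp_eq
    (hR : Measure.QuasiMeasurePreserving R lam lam) {g : Y → ℝ} (hg : AEStronglyMeasurable g lam)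
    (hinv : g ∘ R =ᵐ[lam] g) : AEStronglyMeasurable[invSigma R] g lam := by
  obtain ⟨g₀, hg₀, hgg₀⟩ := hg
  have hinv₀ : g₀ ∘ R =ᵐ[lam] g₀ := ((hR.ae_eq_comp hgg₀).symm.trans hinv).trans hgg₀
  have horbit : ∀ᵐ x ∂lam, ∀ n : ℕ, g₀ (R^[n] x) = g₀ x := by
    rw [ae_all_iff]
    intro n
    induction n with
    | zero => simp only [Function.iterate_zero, id_eq, Eventually.of_forall, implies_true]
    | succ n ih =>
      filter_upwards [ih, (hR.iterate n).ae hinv₀] with x hx hxn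
      rw [Function.iterate_succ_apply', ← hx]
      exact hxn
  refine ⟨fun x => limsup (fun n : ℕ => g₀ (R^[n] x)) atTop, ?_, ?_⟩
  · have hmeas : Measurable fun x => limsup (fun n : ℕ => g₀ (R^[n] x)) atTop :=
      Measurable.limsup fun n => hg₀.measurable.comp (hR.measurable.iterate n)
    refine Measurable.stronglyMeasurable fun s hs => ⟨hmeas hs, ?_⟩
    ext x
    have hshift := Filter.limsup_nat_add (fun n : ℕ => g₀ (R^[n] x)) 1
    simp only [Function.iterate_succ_apply] at hshift
    simp only [Set.mem_preimage, hshift]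
  · filter_upwards [hgg₀, horbit] with x hx hxn
    simp only [hxn, limsup_const, hx]

theorem integral_condExp_mul [IsFiniteMeasure lam] {m : MeasurableSpace Y} (hm : m ≤ mY)
    {a g : Y → ℝ} (ha : MemLp a 2 lam) (hg : MemLp g 2 lam) (hgm : AEStronglyMeasurable[m] g lam) :
    ∫ x, (lam[a | m]) x * g x ∂lam = ∫ x, a x * g x ∂lam :=
  calc ∫ x, (lam[a | m]) x * g x ∂lam = ∫ x, (lam[a * g | m]) x ∂lam :=
        (integral_congr_ae (condExp_mul_of_aestronglyMeasurable_right hgm (ha.integrable_mul hg)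
          (ha.integrable one_le_two))).symm
    _ = ∫ x, a x * g x ∂lam := integral_condExp hm

theorem fixedPoints_koopman (hR : MeasurePreserving R lam lam) :
    (Lp.compMeasurePreservingₗᵢ ℝ (E := ℝ) (p := 2) R hR).toContinuousLinearMap.eqLocus
      (1 : Lp ℝ 2 lam →L[ℝ] Lp ℝ 2 lam) = lpMeas ℝ ℝ (invSigma R) 2 lam := by
  ext h
  have hcoe := Lp.coeFn_compMeasurePreserving h hR
  rw [mem_lpMeas_iff_aestronglyMeasurable]
  change Lp.compMeasurePreserving R hR h = h ↔ _
  constructor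
  · intro hfix
    rw [hfix] at hcoe
    exact aestronglyMeasurable_invSigma_of_ae_comp_eq hR.quasiMeasurePreserving
      (Lp.aestronglyMeasurable h) hcoe.symm
  · intro hmeas
    exact Lp.ext (hcoe.trans
      (ae_comp_eq_of_aestronglyMeasurable_invSigma hR.quasiMeasurePreserving hmeas))

theorem tendsto_birkhoffAverage_koopman (hR : MeasurePreserving R lam lam) (u : Lp ℝ 2 lam) :
    Tendsto (birkhoffAverage ℝ (Lp.compMeasurePreserving (E := ℝ) (p := 2) R hR) _root_.id · u)
      atTop (nhds (condExpL2 ℝ ℝ (invSigma_le R) u : Lp ℝ 2 lam)) := by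
  let U := (Lp.compMeasurePreservingₗᵢ ℝ (E := ℝ) (p := 2) R hR).toContinuousLinearMap
  have hU : ‖U‖ ≤ 1 := LinearIsometry.norm_toContinuousLinearMap_le _
  have : Fact (invSigma R ≤ mY) := ⟨invSigma_le R⟩
  have hlim := U.tendsto_birkhoffAverage_orthogonalProjection hU u
  have hproj : ((U.eqLocus (1 : Lp ℝ 2 lam →L[ℝ] Lp ℝ 2 lam)).orthogonalProjectionOnto u :
      Lp ℝ 2 lam) = condExpL2 ℝ ℝ (invSigma_le R) u := by
    simp only [condExpL2, ← Submodule.starProjection_apply, U, fixedPoints_koopman hR]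
  exact hproj ▸ hlim

variable [IsFiniteMeasure lam]

theorem BddMeasurable.memLp_condExp {F : Y → ℝ} (hF : BddMeasurable F) (R : Y → Y) :
    MemLp (lam[F | invSigma R]) 2 lam :=
  (hF.memLp lam 2).condExp one_le_two

/-- The class in `L²(lam)` of the conditional expectation on the `R`-invariant sets. -/
noncomputable def BddMeasurable.condToL2 {F : Y → ℝ} (hF : BddMeasurable F) (R : Y → Y) :
    Lp ℝ 2 lam :=
  (hF.memLp_condExp R).toLp _

theorem BddMeasurable.tendsto_toL2_birkhoffAverage (hR : MeasurePreserving R lam lam) {F : Y → ℝ}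
    (hF : BddMeasurable F) :
    Tendsto (fun N => (hF.birkhoffAverage hR.measurable N).toL2 lam) atTop
      (nhds (hF.condToL2 R)) := by
  have hiterate : ∀ n, (Lp.compMeasurePreserving R hR)^[n] (hF.toL2 lam) =
      (hF.comp (hR.measurable.iterate n)).toL2 lam := by
    intro n
    induction n with
    | zero => rfl
    | succ n ih =>
      rw [Function.iterate_succ_apply', ih]
      exact Lp.toLp_compMeasurePreserving _ hR
  have haverage : ∀ N, _root_.birkhoffAverage ℝ (Lp.compMeasurePreserving R hR) _root_.id N
      (hF.toL2 lam) = (hF.birkhoffAverage hR.measurable N).toL2 lam := by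
    intro N
    simp only [_root_.birkhoffAverage, birkhoffSum, id, hiterate]
    exact (toL2_average lam (fun n => hF.comp (hR.measurable.iterate n)) N).symm
  have hlimit : (condExpL2 ℝ ℝ (invSigma_le R) (hF.toL2 lam) : Lp ℝ 2 lam) = hF.condToL2 R :=
    Lp.ext (((hF.memLp lam 2).condExpL2_ae_eq_condExp (𝕜 := ℝ) (invSigma_le R)).trans
      (hF.memLp_condExp R).coeFn_toLp.symm)
  simpa only [haverage, hlimit] using tendsto_birkhoffAverage_koopman hR (hF.toL2 lam)

theorem condExp_invSigma_comp (hR : MeasurePreserving R lam lam) (hS : MeasurePreserving S lam lam)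
    (hSR : Function.Commute S R) {F : Y → ℝ} (hF : BddMeasurable F) :
    lam[fun x => F (S x) | invSigma R] =ᵐ[lam] (lam[F | invSigma R]) ∘ S := by
  have haverage : ∀ N, ((hF.comp hS.measurable).birkhoffAverage hR.measurable N).toL2 lam =
      Lp.compMeasurePreservingₗᵢ ℝ S hS ((hF.birkhoffAverage hR.measurable N).toL2 lam) := by
    intro N
    refine Eq.trans ?_ (Lp.toLp_compMeasurePreserving _ hS).symm
    simp only [BddMeasurable.toL2]
    congr 1
    ext x
    simp only [birkhoffAverage, birkhoffSum, Function.comp_apply, (hSR.iterate_right _).eq]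
  have hlimit := (Lp.compMeasurePreservingₗᵢ ℝ S hS).continuous.continuousAt.tendsto.comp
    (hF.tendsto_toL2_birkhoffAverage hR)
  have hlimit' := (hF.comp hS.measurable).tendsto_toL2_birkhoffAverage hR
  simp only [haverage] at hlimit'
  have heq : (hF.comp hS.measurable).condToL2 R =
      Lp.compMeasurePreserving S hS (hF.condToL2 R) := tendsto_nhds_unique hlimit' hlimit
  rw [BddMeasurable.condToL2, BddMeasurable.condToL2, Lp.toLp_compMeasurePreserving] at heq
  exact (MemLp.toLp_eq_toLp_iff _ _).1 heq

end InvariantConditionalExpectation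

section InvariantForm

variable {Y : Type*} [MeasurableSpace Y] {lam : Measure Y} {R S : Y → Y}

/-- The bilinear form `⟨𝔼(a | I_R), 𝔼(b | I_R)⟩` of `L²(lam)`, where `I_R` is the σ-algebra of
`R`-invariant sets. It is the integral of `a ⊗ b` against the relatively independent square of
`lam` over `I_R`. -/
noncomputable def invariantForm (lam : Measure Y) (R : Y → Y) (a b : Y → ℝ) : ℝ :=
  ∫ x, (lam[a | invSigma R]) x * (lam[b | invSigma R]) x ∂lam

theorem invariantForm_comm (a b : Y → ℝ) : invariantForm lam R a b = invariantForm lam R b a := by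
  simp only [invariantForm, mul_comm]

variable [IsFiniteMeasure lam] {F F' G : Y → ℝ}

theorem invariantForm_eq_integral_mul_condExp (hF : BddMeasurable F) (hG : BddMeasurable G) :
    invariantForm lam R F G = ∫ x, F x * (lam[G | invSigma R]) x ∂lam :=
  integral_condExp_mul (invSigma_le R) (hF.memLp lam 2) (hG.memLp_condExp R)
    stronglyMeasurable_condExp.aestronglyMeasurable

theorem invariantForm_add_left (hF : BddMeasurable F) (hF' : BddMeasurable F')
    (hG : BddMeasurable G) :
    invariantForm lam R (fun x => F x + F' x) G =
      invariantForm lam R F G + invariantForm lam R F' G := by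
  have hE := hG.memLp_condExp (lam := lam) R
  rw [invariantForm_eq_integral_mul_condExp (hF.add hF') hG,
    invariantForm_eq_integral_mul_condExp hF hG, invariantForm_eq_integral_mul_condExp hF' hG]
  simp only [add_mul]
  exact integral_add ((hF.memLp lam 2).integrable_mul hE) ((hF'.memLp lam 2).integrable_mul hE)

theorem invariantForm_const_mul_left (hF : BddMeasurable F) (hG : BddMeasurable G) (c : ℝ) :
    invariantForm lam R (fun x => c * F x) G = c * invariantForm lam R F G := by
  rw [invariantForm_eq_integral_mul_condExp (hF.const_mul c) hG,
    invariantForm_eq_integral_mul_condExp hF hG, ← integral_const_mul]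
  simp only [mul_assoc]

theorem invariantForm_add_self (hF : BddMeasurable F) (hG : BddMeasurable G) :
    invariantForm lam R (fun x => F x + G x) (fun x => F x + G x) =
      invariantForm lam R F F + 2 * invariantForm lam R F G + invariantForm lam R G G := by
  rw [invariantForm_add_left hF hG (hF.add hG), invariantForm_comm F, invariantForm_comm G,
    invariantForm_add_left hF hG hF, invariantForm_add_left hF hG hG, invariantForm_comm G F]
  ring

theorem invariantForm_comp (hR : MeasurePreserving R lam lam) (hS : MeasurePreserving S lam lam)
    (hSR : Function.Commute S R) (hF : BddMeasurable F) (hG : BddMeasurable G) :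
    invariantForm lam R (fun x => F (S x)) (fun x => G (S x)) = invariantForm lam R F G := by
  let H : Y → ℝ := fun x => (lam[F | invSigma R]) x * (lam[G | invSigma R]) x
  have hH : AEStronglyMeasurable H (lam.map S) := by
    rw [hS.map_eq]
    exact (integrable_condExp.aestronglyMeasurable).mul integrable_condExp.aestronglyMeasurable
  calc invariantForm lam R (fun x => F (S x)) (fun x => G (S x)) = ∫ x, H (S x) ∂lam :=
        integral_congr_ae ((condExp_invSigma_comp hR hS hSR hF).mul
          (condExp_invSigma_comp hR hS hSR hG))
    _ = ∫ x, H x ∂lam := by rw [← integral_map hS.aemeasurable hH, hS.map_eq]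

theorem tendsto_integral_birkhoffAverage_mul (hR : MeasurePreserving R lam lam)
    (hF : BddMeasurable F) (hG : BddMeasurable G) :
    Tendsto (fun N => ∫ x, birkhoffAverage ℝ R F N x * G x ∂lam) atTop
      (nhds (invariantForm lam R F G)) := by
  have hlim : inner ℝ (hF.condToL2 (lam := lam) R) (hG.toL2 lam) = invariantForm lam R F G := by
    rw [invariantForm_comm, invariantForm_eq_integral_mul_condExp hG hF, L2.inner_def]
    apply integral_congr_ae
    filter_upwards [(hF.memLp_condExp (lam := lam) R).coeFn_toLp, (hG.memLp lam 2).coeFn_toLp]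
      with x hFx hGx
    rw [BddMeasurable.condToL2, BddMeasurable.toL2, hFx, hGx]
    rfl
  have h := (hF.tendsto_toL2_birkhoffAverage hR).inner (𝕜 := ℝ)
    (tendsto_const_nhds (x := hG.toL2 lam))
  simpa only [hlim, BddMeasurable.inner_toL2] using h

theorem norm_sq_condToL2 (hF : BddMeasurable F) :
    ‖hF.condToL2 (lam := lam) R‖ ^ 2 = invariantForm lam R F F := by
  rw [← real_inner_self_eq_norm_sq, L2.inner_def]
  apply integral_congr_ae
  filter_upwards [(hF.memLp_condExp (lam := lam) R).coeFn_toLp] with x hFx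
  rw [BddMeasurable.condToL2, hFx]
  rfl

theorem tendsto_integral_sq_birkhoffAverage (hR : MeasurePreserving R lam lam)
    (hF : BddMeasurable F) :
    Tendsto (fun N => ∫ x, birkhoffAverage ℝ R F N x ^ 2 ∂lam) atTop
      (nhds (invariantForm lam R F F)) := by
  simpa only [BddMeasurable.norm_sq_toL2, norm_sq_condToL2] using
    (hF.tendsto_toL2_birkhoffAverage hR).norm.pow 2

theorem invariantForm_self_le_integral_sq (hF : BddMeasurable F) :
    invariantForm lam R F F ≤ ∫ x, F x ^ 2 ∂lam := by
  rw [← norm_sq_condToL2 hF, ← hF.norm_sq_toL2 lam, BddMeasurable.condToL2, BddMeasurable.toL2,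
    Lp.norm_toLp, Lp.norm_toLp]
  gcongr
  · exact (hF.memLp lam 2).eLpNorm_ne_top
  · exact eLpNorm_condExp_le_eLpNorm _ one_le_two

theorem condExp_invSigma_birkhoffAverage (hR : MeasurePreserving R lam lam)
    (hF : BddMeasurable F) {N : ℕ} (hN : N ≠ 0) :
    lam[birkhoffAverage ℝ R F N | invSigma R] =ᵐ[lam] lam[F | invSigma R] := by
  have hinv : (lam[F | invSigma R]) ∘ R = lam[F | invSigma R] :=
    comp_eq_of_measurable_invSigma stronglyMeasurable_condExp.measurable
  have hiterate : ∀ n, lam[fun x => F (R^[n] x) | invSigma R] =ᵐ[lam] lam[F | invSigma R] := by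
    intro n
    filter_upwards [condExp_invSigma_comp hR (hR.iterate n) (Function.Commute.self_iterate R n).symm
      hF] with x hx
    rw [hx, Function.iterate_invariant hinv]
  have hsum := condExp_finsetSum (μ := lam) (s := range N) (f := fun n x => F (R^[n] x))
    (fun n _ => (hF.comp (hR.measurable.iterate n)).integrable lam) (invSigma R)
  have hsmul := condExp_smul (μ := lam) (N : ℝ)⁻¹ (∑ n ∈ range N, fun x => F (R^[n] x)) (invSigma R)
  have hfun : birkhoffAverage ℝ R F N = (N : ℝ)⁻¹ • ∑ n ∈ range N, fun x => F (R^[n] x) := by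
    ext x
    simp only [birkhoffAverage, birkhoffSum, Pi.smul_apply, Finset.sum_apply]
  rw [hfun]
  filter_upwards [hsmul, hsum, ae_all_iff.2 hiterate] with x hx hx' hxn
  rw [hx, Pi.smul_apply, hx', Finset.sum_apply, Finset.sum_congr rfl fun n _ => hxn n]
  simp only [sum_const, card_range, nsmul_eq_mul, smul_eq_mul]
  rw [inv_mul_cancel_left₀ (Nat.cast_ne_zero.2 hN)]

theorem invariantForm_self_le_integral_sq_birkhoffAverage (hR : MeasurePreserving R lam lam)
    (hF : BddMeasurable F) {N : ℕ} (hN : N ≠ 0) :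
    invariantForm lam R F F ≤ ∫ x, birkhoffAverage ℝ R F N x ^ 2 ∂lam := by
  have havg := condExp_invSigma_birkhoffAverage hR hF hN
  refine le_of_eq_of_le ?_ (invariantForm_self_le_integral_sq (R := R)
    (hF.birkhoffAverage hR.measurable N))
  exact integral_congr_ae (havg.symm.mul havg.symm)

end InvariantForm

section RelativeSquare

/-- The function `a ⊗ b : (x, y) ↦ a x * b y`. -/
def tensorFun {Y : Type*} (a b : Y → ℝ) : Y × Y → ℝ :=
  fun p => a p.1 * b p.2

/-- `lam1` is the relatively independent square of `lam` over the σ-algebra of `R`-invariant sets.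
It is specified by its values on the functions `a ⊗ b`, which determine it. -/
def IsRelSquare {Y : Type*} [MeasurableSpace Y] (lam : Measure Y) (R : Y → Y)
    (lam1 : Measure (Y × Y)) : Prop :=
  ∀ a b : Y → ℝ, BddMeasurable a → BddMeasurable b →
    ∫ p, tensorFun a b p ∂lam1 = invariantForm lam R a b

theorem tensorFun_indicator_one {Y : Type*} (s t : Set Y) :
    tensorFun (s.indicator fun _ => 1) (t.indicator fun _ => 1) =
      (s ×ˢ t).indicator (fun _ => (1 : ℝ)) := by
  ext p
  by_cases hs : p.1 ∈ s <;> by_cases ht : p.2 ∈ t <;> simp [tensorFun, Set.indicator, hs, ht]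

theorem tensorFun_const_mul_left {Y : Type*} (t : ℝ) (a b : Y → ℝ) :
    tensorFun (fun x => t * a x) b = fun p => t * tensorFun a b p :=
  funext fun _ => mul_assoc _ _ _

theorem tensorFun_const_mul_right {Y : Type*} (t : ℝ) (a b : Y → ℝ) :
    tensorFun a (fun x => t * b x) = fun p => t * tensorFun a b p :=
  funext fun _ => mul_left_comm _ _ _

variable {Y : Type*} [MeasurableSpace Y] {lam : Measure Y} {R S : Y → Y} {lam1 : Measure (Y × Y)}

theorem BddMeasurable.tensorFun {a b : Y → ℝ} (ha : BddMeasurable a) (hb : BddMeasurable b) :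
    BddMeasurable (tensorFun a b) :=
  (ha.comp measurable_fst).mul (hb.comp measurable_snd)

theorem measurePreserving_prodMap_of_integral_tensorFun [IsFiniteMeasure lam1] {v w : Y → Y}
    (hv : Measurable v) (hw : Measurable w)
    (h : ∀ a b : Y → ℝ, BddMeasurable a → BddMeasurable b →
      ∫ p, tensorFun a b (Prod.map v w p) ∂lam1 = ∫ p, tensorFun a b p ∂lam1) :
    MeasurePreserving (Prod.map v w) lam1 lam1 := by
  have hvw : Measurable (Prod.map v w) := hv.prodMap hw
  have : IsFiniteMeasure (lam1.map (Prod.map v w)) := Measure.isFiniteMeasure_map _ _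
  refine ⟨hvw, Measure.ext_prod fun {s t} hs ht => ?_⟩
  have hst := h _ _ (BddMeasurable.indicator_one hs) (BddMeasurable.indicator_one ht)
  rw [tensorFun_indicator_one, ← integral_map hvw.aemeasurable
    (measurable_const.indicator (hs.prod ht)).aestronglyMeasurable,
    integral_indicator_const _ (hs.prod ht), integral_indicator_const _ (hs.prod ht), smul_eq_mul,
    smul_eq_mul, mul_one, mul_one] at hst
  exact (measureReal_eq_measureReal_iff).1 hst

theorem ae_eq_zero_of_integral_mul_tensorFun [IsFiniteMeasure lam1] {h : Y × Y → ℝ}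
    (hh : Integrable h lam1)
    (horth : ∀ a b : Y → ℝ, BddMeasurable a → BddMeasurable b →
      ∫ p, tensorFun a b p * h p ∂lam1 = 0) :
    h =ᵐ[lam1] 0 := by
  have hrect : ∀ s t : Set Y, MeasurableSet s → MeasurableSet t →
      ∫ p in s ×ˢ t, h p ∂lam1 = 0 := by
    intro s t hs ht
    rw [← horth _ _ (BddMeasurable.indicator_one hs) (BddMeasurable.indicator_one ht),
      ← integral_indicator (hs.prod ht), tensorFun_indicator_one]
    exact integral_congr_ae (Eventually.of_forall fun p => by
      by_cases hp : p ∈ s ×ˢ t <;> simp [hp])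
  refine hh.ae_eq_zero_of_forall_setIntegral_eq_zero fun s hs _ => ?_
  induction s, hs using MeasurableSpace.induction_on_inter generateFrom_prod.symm
    isPiSystem_prod with
  | empty => exact setIntegral_empty
  | basic u hu =>
    obtain ⟨s, hs, t, ht, rfl⟩ := hu
    exact hrect s t hs ht
  | compl t ht ih =>
    have huniv := hrect _ _ MeasurableSet.univ MeasurableSet.univ
    rw [Set.univ_prod_univ, setIntegral_univ, ← integral_add_compl ht hh, ih (measure_lt_top _ _),
      zero_add] at huniv
    exact huniv
  | iUnion f hd hm ih =>
    rw [integral_iUnion hm hd hh.integrableOn]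
    simp only [fun i => ih i (measure_lt_top _ _), tsum_zero]

theorem condExp_ae_eq_of_invariantForm_tensorFun [IsFiniteMeasure lam1] {Q : Y × Y → Y × Y}
    {F G : Y × Y → ℝ} (hF : BddMeasurable F) (hG : BddMeasurable G)
    (h : ∀ a b : Y → ℝ, BddMeasurable a → BddMeasurable b →
      invariantForm lam1 Q F (tensorFun a b) = invariantForm lam1 Q G (tensorFun a b)) :
    lam1[F | invSigma Q] =ᵐ[lam1] lam1[G | invSigma Q] := by
  have hdiff : lam1[F | invSigma Q] - lam1[G | invSigma Q] =ᵐ[lam1] 0 := by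
    refine ae_eq_zero_of_integral_mul_tensorFun (integrable_condExp.sub integrable_condExp)
      fun a b ha hb => ?_
    have hab := ha.tensorFun hb
    simp only [Pi.sub_apply, mul_sub]
    refine (integral_sub ((hab.memLp lam1 2).integrable_mul (hF.memLp_condExp Q))
      ((hab.memLp lam1 2).integrable_mul (hG.memLp_condExp Q))).trans ?_
    simp only [Pi.mul_apply]
    rw [← invariantForm_eq_integral_mul_condExp hab hF,
      ← invariantForm_eq_integral_mul_condExp hab hG, invariantForm_comm _ F,
      invariantForm_comm _ G, h a b ha hb, sub_self]
  filter_upwards [hdiff] with x hx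
  exact sub_eq_zero.1 hx

namespace IsRelSquare

theorem isProbabilityMeasure [IsProbabilityMeasure lam] (h : IsRelSquare lam R lam1) :
    IsProbabilityMeasure lam1 := by
  have hone := h (fun _ => 1) (fun _ => 1) (.const 1) (.const 1)
  simp only [tensorFun, invariantForm, condExp_const (invSigma_le R), mul_one, integral_const,
    probReal_univ, smul_eq_mul] at hone
  exact ⟨(ENNReal.toReal_eq_one_iff _).1 hone⟩

variable [IsProbabilityMeasure lam]

theorem measurePreserving_prodMap (h : IsRelSquare lam R lam1) (hR : MeasurePreserving R lam lam)
    (hS : MeasurePreserving S lam lam) (hSR : Function.Commute S R) :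
    MeasurePreserving (Prod.map S S) lam1 lam1 := by
  have := h.isProbabilityMeasure
  refine measurePreserving_prodMap_of_integral_tensorFun hS.measurable hS.measurable
    fun a b ha hb => ?_
  rw [h a b ha hb, ← invariantForm_comp hR hS hSR ha hb]
  exact h _ _ (ha.comp hS.measurable) (hb.comp hS.measurable)

end IsRelSquare

end RelativeSquare

section TensorAlgebra

/-- The multiplicative monoid of functions `a ⊗ b` with `a` and `b` bounded measurable. -/
def tensorSubmonoid (Y : Type*) [MeasurableSpace Y] : Submonoid (Y × Y → ℝ) where
  carrier := {F | ∃ a b, BddMeasurable a ∧ BddMeasurable b ∧ F = tensorFun a b}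
  one_mem' := ⟨fun _ => 1, fun _ => 1, .const 1, .const 1,
    funext fun _ => (mul_one (1 : ℝ)).symm⟩
  mul_mem' := by
    rintro _ _ ⟨a, b, ha, hb, rfl⟩ ⟨c, d, hc, hd, rfl⟩
    exact ⟨_, _, ha.mul hc, hb.mul hd, funext fun _ => mul_mul_mul_comm _ _ _ _⟩

/-- The algebra of finite sums of functions `a ⊗ b` with `a` and `b` bounded measurable. -/
def tensorAlgebra (Y : Type*) [MeasurableSpace Y] : Subalgebra ℝ (Y × Y → ℝ) :=
  Algebra.adjoin ℝ (tensorSubmonoid Y)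

variable {Y : Type*} [MeasurableSpace Y]

theorem tensorFun_mem_tensorAlgebra {a b : Y → ℝ} (ha : BddMeasurable a) (hb : BddMeasurable b) :
    tensorFun a b ∈ tensorAlgebra Y :=
  Algebra.subset_adjoin ⟨a, b, ha, hb, rfl⟩

theorem tensorAlgebra_induction {p : (F : Y × Y → ℝ) → F ∈ tensorAlgebra Y → Prop}
    (tensor : ∀ a b (ha : BddMeasurable a) (hb : BddMeasurable b),
      p (tensorFun a b) (tensorFun_mem_tensorAlgebra ha hb))
    (add : ∀ F G hF hG, p F hF → p G hG → p (F + G) (add_mem hF hG))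
    (smul : ∀ (c : ℝ) F hF, p F hF → p (c • F) (Subalgebra.smul_mem _ hF c))
    {F : Y × Y → ℝ} (hF : F ∈ tensorAlgebra Y) : p F hF := by
  have hspan : (tensorAlgebra Y).toSubmodule =
      Submodule.span ℝ (tensorSubmonoid Y : Set (Y × Y → ℝ)) := by
    rw [tensorAlgebra, Algebra.adjoin_eq_span, Submonoid.closure_eq]
  suffices h : ∀ G ∈ Submodule.span ℝ (tensorSubmonoid Y : Set (Y × Y → ℝ)),
      ∃ hG : G ∈ tensorAlgebra Y, p G hG from
    (h F (hspan ▸ hF)).2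
  intro G hG
  induction hG using Submodule.span_induction with
  | mem G hG =>
    obtain ⟨a, b, ha, hb, rfl⟩ := hG
    exact ⟨_, tensor a b ha hb⟩
  | zero =>
    have hzero := smul 0 _ _ (tensor (fun _ => 1) (fun _ => 1) (.const 1) (.const 1))
    simp only [zero_smul] at hzero
    exact ⟨_, hzero⟩
  | add F G _ _ hF hG => exact ⟨_, add F G _ _ hF.2 hG.2⟩
  | smul c F _ hF => exact ⟨_, smul c F _ hF.2⟩

theorem bddMeasurable_of_mem_tensorAlgebra {F : Y × Y → ℝ} (hF : F ∈ tensorAlgebra Y) :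
    BddMeasurable F := by
  induction hF using tensorAlgebra_induction with
  | tensor a b ha hb => exact ha.tensorFun hb
  | add F G _ _ hF hG => exact hF.add hG
  | smul c F _ hF => exact hF.const_mul c

theorem comp_prodMap_mem_tensorAlgebra {R : Y → Y} (hR : Measurable R) {F : Y × Y → ℝ}
    (hF : F ∈ tensorAlgebra Y) : F ∘ Prod.map R R ∈ tensorAlgebra Y := by
  induction hF using tensorAlgebra_induction with
  | tensor a b ha hb => exact tensorFun_mem_tensorAlgebra (ha.comp hR) (hb.comp hR)
  | add F G _ _ hF hG => exact add_mem hF hG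
  | smul c F _ hF => exact Subalgebra.smul_mem _ hF c

theorem birkhoffAverage_mem_tensorAlgebra {R : Y → Y} (hR : Measurable R) {F : Y × Y → ℝ}
    (hF : F ∈ tensorAlgebra Y) (N : ℕ) :
    birkhoffAverage ℝ (Prod.map R R) F N ∈ tensorAlgebra Y := by
  have hfun : birkhoffAverage ℝ (Prod.map R R) F N =
      (N : ℝ)⁻¹ • ∑ n ∈ range N, F ∘ Prod.map R^[n] R^[n] := by
    ext p
    simp only [birkhoffAverage, birkhoffSum, Prod.map_iterate, Pi.smul_apply, Finset.sum_apply,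
      Function.comp_apply]
  rw [hfun]
  exact Subalgebra.smul_mem _
    (sum_mem fun n _ => comp_prodMap_mem_tensorAlgebra (hR.iterate n) hF) _

end TensorAlgebra

section CubeSymmetry

variable {Y : Type*} [MeasurableSpace Y] {lam : Measure Y} [IsProbabilityMeasure lam] {R : Y → Y}
  {lam1 : Measure (Y × Y)} {a b c d : Y → ℝ}

namespace IsRelSquare

theorem tendsto_average_invariantForm (h : IsRelSquare lam R lam1)
    (hR : MeasurePreserving R lam lam) (ha : BddMeasurable a) (hb : BddMeasurable b)
    (hc : BddMeasurable c) (hd : BddMeasurable d) :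
    Tendsto (fun N : ℕ => (N : ℝ)⁻¹ * ∑ n ∈ range N,
        invariantForm lam R (fun x => a x * b (R^[n] x)) (fun x => c x * d (R^[n] x))) atTop
      (nhds (invariantForm lam1 (Prod.map R R) (tensorFun a c) (tensorFun b d))) := by
  have := h.isProbabilityMeasure
  have hRR := h.measurePreserving_prodMap hR hR (.refl R)
  rw [invariantForm_comm]
  refine (tendsto_integral_birkhoffAverage_mul hRR (hb.tensorFun hd) (ha.tensorFun hc)).congr
    fun N => ?_
  have hiterate : ∀ n, invariantForm lam R (fun x => a x * b (R^[n] x))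
      (fun x => c x * d (R^[n] x)) =
      ∫ p, tensorFun b d ((Prod.map R R)^[n] p) * tensorFun a c p ∂lam1 := by
    intro n
    rw [← h _ _ (ha.mul (hb.comp (hR.measurable.iterate n)))
      (hc.mul (hd.comp (hR.measurable.iterate n)))]
    simp only [tensorFun, Prod.map_iterate, Prod.map_fst, Prod.map_snd]
    congr 1 with p
    ring
  simp only [hiterate]
  rw [← BddMeasurable.integral_average lam1 fun n =>
    ((hb.tensorFun hd).comp (hRR.measurable.iterate n)).mul (ha.tensorFun hc)]
  simp only [birkhoffAverage, birkhoffSum, smul_eq_mul, mul_assoc, Finset.sum_mul]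

theorem tendsto_average_integral_graph (h : IsRelSquare lam R lam1)
    (hR : MeasurePreserving R lam lam) {F : Y × Y → ℝ} (hF : F ∈ tensorAlgebra Y) :
    Tendsto (fun N : ℕ => (N : ℝ)⁻¹ * ∑ n ∈ range N, ∫ x, F (x, R^[n] x) ∂lam) atTop
      (nhds (∫ p, F p ∂lam1)) := by
  have := h.isProbabilityMeasure
  have hintegrable : ∀ F ∈ tensorAlgebra Y, ∀ n, Integrable (fun x => F (x, R^[n] x)) lam :=
    fun F hF n => ((bddMeasurable_of_mem_tensorAlgebra hF).comp
      (measurable_id'.prodMk (hR.measurable.iterate n))).integrable lam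
  induction hF using tensorAlgebra_induction with
  | tensor a b ha hb =>
    rw [h a b ha hb, invariantForm_comm]
    refine (tendsto_integral_birkhoffAverage_mul hR hb ha).congr fun N => ?_
    simp only [tensorFun]
    rw [← BddMeasurable.integral_average lam fun n => ha.mul (hb.comp (hR.measurable.iterate n))]
    simp only [birkhoffAverage, birkhoffSum, smul_eq_mul, ← mul_sum, mul_left_comm (a _),
      mul_comm _ (a _)]
  | add F G hF hG ihF ihG =>
    have hsum : ∫ p, (F + G) p ∂lam1 = ∫ p, F p ∂lam1 + ∫ p, G p ∂lam1 :=
      integral_add ((bddMeasurable_of_mem_tensorAlgebra hF).integrable lam1)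
        ((bddMeasurable_of_mem_tensorAlgebra hG).integrable lam1)
    rw [hsum]
    refine (ihF.add ihG).congr fun N => ?_
    simp only [Pi.add_apply, integral_add (hintegrable F hF _) (hintegrable G hG _),
      sum_add_distrib, mul_add]
  | smul c F _ ihF =>
    simp only [Pi.smul_apply, smul_eq_mul, integral_const_mul, ← mul_sum, mul_left_comm _ c]
    exact ihF.const_mul c

theorem le_invariantForm_of_tendsto_average (h : IsRelSquare lam R lam1)
    (hR : MeasurePreserving R lam lam) {F : Y × Y → ℝ} (hF : F ∈ tensorAlgebra Y) {L : ℝ}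
    (hL : Tendsto (fun N : ℕ => (N : ℝ)⁻¹ * ∑ n ∈ range N,
      invariantForm lam R (fun x => F (x, R^[n] x)) (fun x => F (x, R^[n] x))) atTop (nhds L)) :
    L ≤ invariantForm lam1 (Prod.map R R) F F := by
  have := h.isProbabilityMeasure
  have hRR := h.measurePreserving_prodMap hR hR (.refl R)
  have hFb := bddMeasurable_of_mem_tensorAlgebra hF
  have hgraph : ∀ M n x, birkhoffAverage ℝ R (fun x => F (x, R^[n] x)) M x =
      birkhoffAverage ℝ (Prod.map R R) F M (x, R^[n] x) := by
    intro M n x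
    simp only [birkhoffAverage, birkhoffSum, Prod.map_iterate, Prod.map_apply,
      (Function.Commute.iterate_iterate_self R n _).eq]
  have hbound : ∀ M ≠ 0, L ≤ ∫ p, birkhoffAverage ℝ (Prod.map R R) F M p ^ 2 ∂lam1 := by
    intro M hM
    have hmem := pow_mem (birkhoffAverage_mem_tensorAlgebra hR.measurable hF M) 2
    refine le_of_tendsto_of_tendsto' hL (h.tendsto_average_integral_graph hR hmem) fun N => ?_
    gcongr with n
    simpa only [hgraph, Pi.pow_apply] using invariantForm_self_le_integral_sq_birkhoffAverage hR
      (hFb.comp (measurable_id'.prodMk (hR.measurable.iterate n))) hM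
  exact ge_of_tendsto (tendsto_integral_sq_birkhoffAverage hRR hFb)
    ((eventually_ne_atTop 0).mono hbound)

end IsRelSquare

/-- The failure of the four-point form `(a, b, c, d) ↦ ⟨𝔼(a ⊗ b), 𝔼(c ⊗ d)⟩` to be symmetric in
its two middle arguments. It vanishes identically, by `IsRelSquare.swapDefect_eq_zero`. -/
noncomputable def swapDefect (lam1 : Measure (Y × Y)) (R : Y → Y) (a b c d : Y → ℝ) : ℝ :=
  invariantForm lam1 (Prod.map R R) (tensorFun a b) (tensorFun c d) -
    invariantForm lam1 (Prod.map R R) (tensorFun a c) (tensorFun b d)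

theorem swapDefect_const_mul_third [IsFiniteMeasure lam1] (ha : BddMeasurable a)
    (hb : BddMeasurable b) (hc : BddMeasurable c) (hd : BddMeasurable d) (t : ℝ) :
    swapDefect lam1 R a b (fun x => t * c x) d = t * swapDefect lam1 R a b c d := by
  rw [swapDefect, swapDefect, tensorFun_const_mul_left, tensorFun_const_mul_right,
    invariantForm_const_mul_left (ha.tensorFun hc) (hb.tensorFun hd), invariantForm_comm,
    invariantForm_const_mul_left (hc.tensorFun hd) (ha.tensorFun hb), invariantForm_comm, mul_sub]

theorem swapDefect_const_mul_first [IsFiniteMeasure lam1] (ha : BddMeasurable a)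
    (hb : BddMeasurable b) (hc : BddMeasurable c) (hd : BddMeasurable d) (t : ℝ) :
    swapDefect lam1 R (fun x => t * a x) b c d = t * swapDefect lam1 R a b c d := by
  rw [swapDefect, swapDefect, tensorFun_const_mul_left, tensorFun_const_mul_left,
    invariantForm_const_mul_left (ha.tensorFun hb) (hc.tensorFun hd),
    invariantForm_const_mul_left (ha.tensorFun hc) (hb.tensorFun hd), mul_sub]

namespace IsRelSquare

/-- The quadratic form `∑ⱼ ∑ₖ swapDefect aⱼ bⱼ aₖ bₖ` compares the energy of `∑ⱼ aⱼ ⊗ bⱼ` for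
`R × R` with the average energy for `R` of its restrictions to the graphs of `R^n`. -/
theorem swapDefect_add_nonneg (h : IsRelSquare lam R lam1) (hR : MeasurePreserving R lam lam)
    (ha : BddMeasurable a) (hb : BddMeasurable b) (hc : BddMeasurable c) (hd : BddMeasurable d) :
    0 ≤ swapDefect lam1 R a b a b + 2 * swapDefect lam1 R a b c d + swapDefect lam1 R c d c d := by
  have := h.isProbabilityMeasure
  have hlim := ((h.tendsto_average_invariantForm hR ha hb ha hb).add
    ((h.tendsto_average_invariantForm hR ha hb hc hd).const_mul 2)).add
      (h.tendsto_average_invariantForm hR hc hd hc hd)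
  have hle := h.le_invariantForm_of_tendsto_average hR
    (add_mem (tensorFun_mem_tensorAlgebra ha hb) (tensorFun_mem_tensorAlgebra hc hd))
    (hlim.congr fun N => by
      simp only [Pi.add_apply, tensorFun, invariantForm_add_self
        (ha.mul (hb.comp (hR.measurable.iterate _))) (hc.mul (hd.comp (hR.measurable.iterate _))),
        sum_add_distrib, ← mul_sum]
      ring)
  have hexpand := invariantForm_add_self (lam := lam1) (R := Prod.map R R) (ha.tensorFun hb)
    (hc.tensorFun hd)
  have hcombined := hle.trans_eq hexpand
  simp only [swapDefect]
  linarith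

/-- A nonnegative quadratic polynomial in `t` with vanishing constant term has vanishing linear
term. -/
theorem swapDefect_eq_zero_of_diag (h : IsRelSquare lam R lam1) (hR : MeasurePreserving R lam lam)
    (ha : BddMeasurable a) (hb : BddMeasurable b) (hc : BddMeasurable c) (hd : BddMeasurable d)
    (hdiag : swapDefect lam1 R a b a b = 0) : swapDefect lam1 R a b c d = 0 := by
  have := h.isProbabilityMeasure
  have hquad : ∀ t : ℝ, 0 ≤ swapDefect lam1 R c d c d * (t * t) +
      2 * swapDefect lam1 R a b c d * t + 0 := by
    intro t
    have hct := hc.const_mul t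
    have ht := h.swapDefect_add_nonneg hR ha hb hct hd
    rw [hdiag, swapDefect_const_mul_third ha hb hc hd, swapDefect_const_mul_third hct hd hc hd,
      swapDefect_const_mul_first hc hd hc hd] at ht
    linarith
  have hdiscrim := discrim_le_zero hquad
  rw [discrim] at hdiscrim
  nlinarith

theorem swapDefect_eq_zero (h : IsRelSquare lam R lam1) (hR : MeasurePreserving R lam lam)
    (ha : BddMeasurable a) (hb : BddMeasurable b) (hc : BddMeasurable c) (hd : BddMeasurable d) :
    swapDefect lam1 R a b c d = 0 := by
  have hsquares : swapDefect lam1 R a a b b = 0 :=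
    h.swapDefect_eq_zero_of_diag hR ha ha hb hb (sub_self _)
  have hdiag : swapDefect lam1 R a b a b = 0 := by
    rw [← neg_eq_zero, swapDefect, neg_sub]
    exact hsquares
  exact h.swapDefect_eq_zero_of_diag hR ha hb hc hd hdiag

theorem invariantForm_tensorFun_swap (h : IsRelSquare lam R lam1)
    (hR : MeasurePreserving R lam lam) (ha : BddMeasurable a) (hb : BddMeasurable b)
    (hc : BddMeasurable c) (hd : BddMeasurable d) :
    invariantForm lam1 (Prod.map R R) (tensorFun a b) (tensorFun c d) =
      invariantForm lam1 (Prod.map R R) (tensorFun a c) (tensorFun b d) :=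
  sub_eq_zero.1 (h.swapDefect_eq_zero hR ha hb hc hd)

end IsRelSquare

end CubeSymmetry

section TransformationIndependence

theorem commute_prodMap {Y Z : Type*} {f g : Y → Y} {f' g' : Z → Z} (h : Function.Commute f g)
    (h' : Function.Commute f' g') : Function.Commute (Prod.map f f') (Prod.map g g') :=
  fun p => Prod.ext (h p.1) (h' p.2)

namespace IsRelSquare

variable {Y : Type*} [MeasurableSpace Y] {lam : Measure Y} [IsProbabilityMeasure lam] {R S : Y → Y}
  {lam1 : Measure (Y × Y)}

theorem measurePreserving_prodMap_id (h : IsRelSquare lam S lam1)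
    (hS : MeasurePreserving S lam lam) : MeasurePreserving (Prod.map id S) lam1 lam1 := by
  have := h.isProbabilityMeasure
  refine measurePreserving_prodMap_of_integral_tensorFun measurable_id hS.measurable
    fun a b ha hb => ?_
  have hcond : lam[fun x => b (S x) | invSigma S] =ᵐ[lam] lam[b | invSigma S] :=
    (condExp_invSigma_comp hS hS (.refl S) hb).trans
      (comp_eq_of_measurable_invSigma stronglyMeasurable_condExp.measurable).eventuallyEq
  calc ∫ p, tensorFun a b (Prod.map id S p) ∂lam1
      = invariantForm lam S a (fun x => b (S x)) := h _ _ ha (hb.comp hS.measurable)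
    _ = invariantForm lam S a b := integral_congr_ae ((ae_eq_refl _).mul hcond)
    _ = ∫ p, tensorFun a b p ∂lam1 := (h a b ha hb).symm

theorem invariantForm_tensorFun_comp_right (hRsq : IsRelSquare lam R lam1)
    (hSsq : IsRelSquare lam S lam1) (hR : MeasurePreserving R lam lam)
    (hS : MeasurePreserving S lam lam) (hSR : Function.Commute S R) {a b c d : Y → ℝ}
    (ha : BddMeasurable a) (hb : BddMeasurable b) (hc : BddMeasurable c) (hd : BddMeasurable d) :
    invariantForm lam1 (Prod.map R R) (tensorFun a b)
        (fun p => tensorFun c d (Prod.map S S p)) =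
      invariantForm lam1 (Prod.map R R) (tensorFun a b) (tensorFun c d) := by
  have := hRsq.isProbabilityMeasure
  have hcS := hc.comp hS.measurable
  have hdS := hd.comp hS.measurable
  calc invariantForm lam1 (Prod.map R R) (tensorFun a b) (fun p => tensorFun c d (Prod.map S S p))
      = invariantForm lam1 (Prod.map R R) (tensorFun a fun x => c (S x))
          (tensorFun b fun x => d (S x)) := hRsq.invariantForm_tensorFun_swap hR ha hb hcS hdS
    _ = invariantForm lam1 (Prod.map R R) (tensorFun a c) (tensorFun b d) :=
        invariantForm_comp (hRsq.measurePreserving_prodMap hR hR (.refl R))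
          (hSsq.measurePreserving_prodMap_id hS) (commute_prodMap .id_left hSR) (ha.tensorFun hc)
          (hb.tensorFun hd)
    _ = invariantForm lam1 (Prod.map R R) (tensorFun a b) (tensorFun c d) :=
        hRsq.invariantForm_tensorFun_swap hR ha hc hb hd

theorem condExp_comp_prodMap (hRsq : IsRelSquare lam R lam1) (hSsq : IsRelSquare lam S lam1)
    (hR : MeasurePreserving R lam lam) (hS : MeasurePreserving S lam lam)
    (hSR : Function.Commute S R) {G : Y × Y → ℝ} (hG : BddMeasurable G) :
    lam1[fun p => G (Prod.map S S p) | invSigma (Prod.map R R)] =ᵐ[lam1]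
      lam1[G | invSigma (Prod.map R R)] := by
  have := hRsq.isProbabilityMeasure
  have hSS := hRsq.measurePreserving_prodMap hR hS hSR
  have htensor : ∀ c d : Y → ℝ, BddMeasurable c → BddMeasurable d →
      lam1[fun p => tensorFun c d (Prod.map S S p) | invSigma (Prod.map R R)] =ᵐ[lam1]
        lam1[tensorFun c d | invSigma (Prod.map R R)] := fun c d hc hd =>
    condExp_ae_eq_of_invariantForm_tensorFun ((hc.tensorFun hd).comp hSS.measurable)
      (hc.tensorFun hd) fun a b ha hb => by
        rw [invariantForm_comm, invariantForm_comm (tensorFun c d),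
          hRsq.invariantForm_tensorFun_comp_right hSsq hR hS hSR ha hb hc hd]
  refine condExp_ae_eq_of_invariantForm_tensorFun (hG.comp hSS.measurable) hG fun a b ha hb => ?_
  calc invariantForm lam1 (Prod.map R R) (fun p => G (Prod.map S S p)) (tensorFun a b)
      = invariantForm lam1 (Prod.map R R) (fun p => G (Prod.map S S p))
          (fun p => tensorFun a b (Prod.map S S p)) :=
        integral_congr_ae ((ae_eq_refl _).mul (htensor a b ha hb).symm)
    _ = invariantForm lam1 (Prod.map R R) G (tensorFun a b) :=
        invariantForm_comp (hRsq.measurePreserving_prodMap hR hR (.refl R)) hSS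
          (commute_prodMap hSR hSR) hG (ha.tensorFun hb)

theorem aestronglyMeasurable_condExp (hRsq : IsRelSquare lam R lam1)
    (hSsq : IsRelSquare lam S lam1) (hR : MeasurePreserving R lam lam)
    (hS : MeasurePreserving S lam lam) (hSR : Function.Commute S R) {G : Y × Y → ℝ}
    (hG : BddMeasurable G) :
    AEStronglyMeasurable[invSigma (Prod.map S S)] (lam1[G | invSigma (Prod.map R R)]) lam1 := by
  have := hRsq.isProbabilityMeasure
  have hSS := hRsq.measurePreserving_prodMap hR hS hSR
  refine aestronglyMeasurable_invSigma_of_ae_comp_eq hSS.quasiMeasurePreserving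
    integrable_condExp.aestronglyMeasurable ?_
  exact (condExp_invSigma_comp (hRsq.measurePreserving_prodMap hR hR (.refl R)) hSS
    (commute_prodMap hSR hSR) hG).symm.trans (hRsq.condExp_comp_prodMap hSsq hR hS hSR hG)

theorem invariantForm_prodMap_eq (hRsq : IsRelSquare lam R lam1) (hSsq : IsRelSquare lam S lam1)
    (hR : MeasurePreserving R lam lam) (hS : MeasurePreserving S lam lam)
    (hSR : Function.Commute S R) {F G : Y × Y → ℝ} (hF : BddMeasurable F) (hG : BddMeasurable G) :
    invariantForm lam1 (Prod.map R R) F G = invariantForm lam1 (Prod.map S S) F G := by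
  have := hRsq.isProbabilityMeasure
  calc invariantForm lam1 (Prod.map R R) F G
      = ∫ p, F p * (lam1[G | invSigma (Prod.map R R)]) p ∂lam1 :=
        invariantForm_eq_integral_mul_condExp hF hG
    _ = ∫ p, (lam1[F | invSigma (Prod.map S S)]) p * (lam1[G | invSigma (Prod.map R R)]) p ∂lam1 :=
        (integral_condExp_mul (invSigma_le _) (hF.memLp lam1 2) (hG.memLp_condExp _)
          (hRsq.aestronglyMeasurable_condExp hSsq hR hS hSR hG)).symm
    _ = ∫ p, (lam1[G | invSigma (Prod.map R R)]) p * (lam1[F | invSigma (Prod.map S S)]) p ∂lam1 :=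
        by simp only [mul_comm]
    _ = ∫ p, G p * (lam1[F | invSigma (Prod.map S S)]) p ∂lam1 :=
        integral_condExp_mul (invSigma_le _) (hG.memLp lam1 2) (hF.memLp_condExp _)
          (hSsq.aestronglyMeasurable_condExp hRsq hS hR hSR.symm hF)
    _ = invariantForm lam1 (Prod.map S S) F G := by
        rw [← invariantForm_eq_integral_mul_condExp hG hF, invariantForm_comm]

theorem prodMap_of_commute (hRsq : IsRelSquare lam R lam1) (hSsq : IsRelSquare lam S lam1)
    (hR : MeasurePreserving R lam lam) (hS : MeasurePreserving S lam lam)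
    (hSR : Function.Commute S R) {lam2 : Measure ((Y × Y) × (Y × Y))}
    (h : IsRelSquare lam1 (Prod.map R R) lam2) : IsRelSquare lam1 (Prod.map S S) lam2 :=
  fun F G hF hG => (h F G hF hG).trans (hRsq.invariantForm_prodMap_eq hSsq hR hS hSR hF hG)

end IsRelSquare

theorem invariantForm_of_ergodic {Y : Type*} [MeasurableSpace Y] {lam : Measure Y}
    [IsProbabilityMeasure lam] {R : Y → Y} (hR : Ergodic R lam) (a b : Y → ℝ) :
    invariantForm lam R a b = (∫ x, a x ∂lam) * ∫ x, b x ∂lam := by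
  have hcond : ∀ F : Y → ℝ, lam[F | invSigma R] =ᵐ[lam] fun _ => ∫ x, F x ∂lam := by
    intro F
    obtain ⟨c, hc⟩ := hR.ae_eq_const_of_ae_eq_comp_ae
      (g := lam[F | invSigma R]) integrable_condExp.aestronglyMeasurable
      (comp_eq_of_measurable_invSigma stronglyMeasurable_condExp.measurable).eventuallyEq
    have hmean := integral_congr_ae hc
    rw [integral_condExp (invSigma_le R)] at hmean
    simp only [Function.const_apply, integral_const, probReal_univ, one_smul] at hmean
    exact hmean ▸ hc
  refine (integral_congr_ae ((hcond a).mul (hcond b))).trans ?_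
  simp only [Pi.mul_apply, integral_const, probReal_univ, one_smul]

end TransformationIndependence

section BoxMeasures

theorem commute_boxMap {X : Type*} {T S : X → X} (hTS : Function.Commute T S) (k : ℕ) :
    Function.Commute (HKBox.map T k) (HKBox.map S k) := by
  induction k with
  | zero => exact hTS
  | succ k ih => exact commute_prodMap ih ih

variable {X : Type*} [MeasurableSpace X] {μ : Measure X} {T S : X → X}
  {ν : ∀ k, Measure (HKBox X k)}

namespace IsHKSeq

theorem isRelSquare (h : IsHKSeq μ T ν) (k : ℕ) :
    IsRelSquare (ν k) (HKBox.map T k) (ν (k + 1)) :=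
  fun a b ha hb => h.2 k a b ha.1 hb.1 ha.2 hb.2

variable [IsProbabilityMeasure μ]

theorem isProbabilityMeasure (h : IsHKSeq μ T ν) (k : ℕ) : IsProbabilityMeasure (ν k) := by
  induction k with
  | zero => exact h.1 ▸ ‹IsProbabilityMeasure μ›
  | succ k ih => exact (h.isRelSquare k).isProbabilityMeasure

theorem measurePreserving_boxMap (h : IsHKSeq μ T ν) (hT : MeasurePreserving T μ μ)
    (hS : MeasurePreserving S μ μ) (hST : Function.Commute S T) (k : ℕ) :
    MeasurePreserving (HKBox.map S k) (ν k) (ν k) := by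
  have hbox : ∀ k, MeasurePreserving (HKBox.map T k) (ν k) (ν k) ∧
      MeasurePreserving (HKBox.map S k) (ν k) (ν k) := by
    intro k
    induction k with
    | zero => exact h.1 ▸ ⟨hT, hS⟩
    | succ k ih =>
      have := h.isProbabilityMeasure k
      exact ⟨(h.isRelSquare k).measurePreserving_prodMap ih.1 ih.1 (.refl _),
        (h.isRelSquare k).measurePreserving_prodMap ih.1 ih.2 (commute_boxMap hST k)⟩
  exact (hbox k).2

theorem of_commute (h : IsHKSeq μ T ν) (hT : Ergodic T μ) (hS : Ergodic S μ)
    (hST : Function.Commute S T) : IsHKSeq μ S ν := by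
  have hsquare : ∀ k, IsRelSquare (ν k) (HKBox.map S k) (ν (k + 1)) := by
    intro k
    induction k with
    | zero =>
      have := h.isProbabilityMeasure 0
      have hT₀ : Ergodic (HKBox.map T 0) (ν 0) := h.1 ▸ hT
      have hS₀ : Ergodic (HKBox.map S 0) (ν 0) := h.1 ▸ hS
      exact fun a b ha hb => ((h.isRelSquare 0 a b ha hb).trans
        (invariantForm_of_ergodic hT₀ a b)).trans (invariantForm_of_ergodic hS₀ a b).symm
    | succ k ih =>
      have := h.isProbabilityMeasure k
      exact (h.isRelSquare k).prodMap_of_commute ih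
        (h.measurePreserving_boxMap hT.toMeasurePreserving hT.toMeasurePreserving (.refl T) k)
        (h.measurePreserving_boxMap hT.toMeasurePreserving hS.toMeasurePreserving hST k)
        (commute_boxMap hST k) (h.isRelSquare (k + 1))
  exact ⟨h.1, fun k a b ha hb ha' hb' => hsquare k a b ⟨ha, ha'⟩ ⟨hb, hb'⟩⟩

end IsHKSeq

end BoxMeasures

section BoxIntegral

variable {X : Type*} {T : X → X} {f g : X → ℝ}

/-- The product `f ∘ R^a * f ∘ R^b` of two shifts of `f`, which comes from correlating an average
along the orbits of `R` with its shifts. -/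
def shiftProd (R : X → X) (f : X → ℝ) (a b : ℕ) : X → ℝ :=
  fun x => f (R^[a] x) * f (R^[b] x)

namespace HKBox

theorem prodFun_mul (f g : X → ℝ) (k : ℕ) (p : HKBox X k) :
    prodFun (fun x => f x * g x) k p = prodFun f k p * prodFun g k p := by
  induction k with
  | zero => rfl
  | succ k ih => simp only [prodFun, ih, mul_mul_mul_comm]

theorem prodFun_const_mul (c : ℝ) (f : X → ℝ) (k : ℕ) (p : HKBox X k) :
    prodFun (fun x => c * f x) k p = c ^ 2 ^ k * prodFun f k p := by
  induction k with
  | zero => simp only [prodFun, pow_zero, pow_one]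
  | succ k ih => simp only [prodFun, ih, pow_succ, mul_two, pow_add, mul_mul_mul_comm]

theorem map_succ_iterate (T : X → X) (k n : ℕ) :
    (map T (k + 1))^[n] = Prod.map (map T k)^[n] (map T k)^[n] :=
  Prod.map_iterate _ _ n

theorem prodFun_comp_iterate (T : X → X) (f : X → ℝ) (n k : ℕ) (p : HKBox X k) :
    prodFun (fun x => f (T^[n] x)) k p = prodFun f k ((map T k)^[n] p) := by
  induction k with
  | zero => rfl
  | succ k ih => simp only [map_succ_iterate, prodFun, ih]; rfl

theorem prodFun_shiftProd (T : X → X) (f : X → ℝ) (a b k : ℕ) (p : HKBox X k) :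
    prodFun (shiftProd T f a b) k p =
      prodFun f k ((map T k)^[a] p) * prodFun f k ((map T k)^[b] p) := by
  rw [← prodFun_comp_iterate, ← prodFun_comp_iterate, ← prodFun_mul]
  rfl

end HKBox

/-- The `2^k`-th power `∫ ∏_ε f(x_ε) dν k` of the `k`-th Host–Kra seminorm of `f`. -/
noncomputable def boxIntegral [MeasurableSpace X] (ν : ∀ k, Measure (HKBox X k)) (k : ℕ)
    (f : X → ℝ) : ℝ :=
  ∫ p, HKBox.prodFun f k p ∂(ν k)

variable [MeasurableSpace X] {μ : Measure X} {ν : ∀ k, Measure (HKBox X k)}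

theorem boxIntegral_const_mul (ν : ∀ k, Measure (HKBox X k)) (k : ℕ) (c : ℝ) (f : X → ℝ) :
    boxIntegral ν k (fun x => c * f x) = c ^ 2 ^ k * boxIntegral ν k f := by
  simp only [boxIntegral, HKBox.prodFun_const_mul, integral_const_mul]

theorem BddMeasurable.prodFun (hf : BddMeasurable f) (k : ℕ) :
    BddMeasurable (HKBox.prodFun f k) := by
  induction k with
  | zero => exact hf
  | succ k ih => exact ih.tensorFun ih

namespace IsHKSeq

theorem boxIntegral_succ (h : IsHKSeq μ T ν) (hf : BddMeasurable f) (k : ℕ) :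
    boxIntegral ν (k + 1) f =
      invariantForm (ν k) (HKBox.map T k) (HKBox.prodFun f k) (HKBox.prodFun f k) :=
  h.isRelSquare k _ _ (hf.prodFun k) (hf.prodFun k)

theorem boxIntegral_succ_nonneg (h : IsHKSeq μ T ν) (hf : BddMeasurable f) (k : ℕ) :
    0 ≤ boxIntegral ν (k + 1) f := by
  rw [h.boxIntegral_succ hf]
  exact integral_nonneg fun _ => mul_self_nonneg _

theorem boxIntegral_eq_zero_of_HKseminorm_eq_zero (h : IsHKSeq μ T ν) (hf : BddMeasurable f)
    {k : ℕ} (hzero : HKseminorm ν (k + 1) f = 0) : boxIntegral ν (k + 1) f = 0 :=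
  (Real.rpow_eq_zero (h.boxIntegral_succ_nonneg hf k) (by positivity)).1 hzero

theorem tendsto_doubleAverage_boxIntegral [IsProbabilityMeasure μ] (h : IsHKSeq μ T ν)
    (hT : MeasurePreserving T μ μ) (hf : BddMeasurable f) (k : ℕ) :
    Tendsto (fun H => doubleAverage H fun a b => boxIntegral ν k (shiftProd T f a b)) atTop
      (nhds (boxIntegral ν (k + 1) f)) := by
  have := h.isProbabilityMeasure k
  have hbox := h.measurePreserving_boxMap hT hT (.refl T) k
  have hF := hf.prodFun k
  rw [h.boxIntegral_succ hf]
  refine (tendsto_integral_sq_birkhoffAverage hbox hF).congr fun H => ?_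
  simp only [boxIntegral, HKBox.prodFun_shiftProd]
  exact BddMeasurable.integral_sq_average (ν k)
    (fun n => hF.comp (hbox.measurable.iterate n)) H

end IsHKSeq

end BoxIntegral

section MultipleAverages

/-- The multiple ergodic average `N⁻¹ ∑_{n < N} ∏_j f_j ∘ T_j^n`. -/
noncomputable def multipleAverage {X ι : Type*} [Fintype ι] (T : ι → X → X) (f : ι → X → ℝ)
    (N : ℕ) : X → ℝ :=
  fun x => (N : ℝ)⁻¹ * ∑ n ∈ range N, ∏ j, f j ((T j)^[n] x)

variable {X ι : Type*} [Fintype ι] {T : ι → X → X} {f : ι → X → ℝ}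

theorem multipleAverage_const_mul (T : ι → X → X) (c : ι → ℝ) (f : ι → X → ℝ) (N : ℕ) (x : X) :
    multipleAverage T (fun j x => c j * f j x) N x = (∏ j, c j) * multipleAverage T f N x := by
  simp only [multipleAverage, prod_mul_distrib, ← mul_sum, mul_left_comm]

theorem abs_prod_le_one {g : ι → ℝ} (hg : ∀ j, |g j| ≤ 1) : |∏ j, g j| ≤ 1 := by
  rw [abs_prod]
  exact prod_le_one (fun j _ => abs_nonneg _) fun j _ => hg j

theorem abs_shiftProd_le_one {g : X → ℝ} (hg : ∀ x, |g x| ≤ 1) (R : X → X) (a b : ℕ) (x : X) :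
    |shiftProd R g a b x| ≤ 1 := by
  rw [shiftProd, abs_mul]
  exact mul_le_one₀ (hg _) (abs_nonneg _) (hg _)

theorem prod_shiftProd_iterate (T : ι → X → X) (f : ι → X → ℝ) (a b k : ℕ) (x : X) :
    ∏ j, shiftProd (T j) (f j) a b ((T j)^[k] x) =
      (∏ j, f j ((T j)^[k + a] x)) * ∏ j, f j ((T j)^[k + b] x) := by
  simp only [shiftProd, ← Function.iterate_add_apply, add_comm _ k, prod_mul_distrib]

variable [MeasurableSpace X]

theorem BddMeasurable.shiftProd {R : X → X} (hR : Measurable R) {g : X → ℝ}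
    (hg : BddMeasurable g) (a b : ℕ) : BddMeasurable (shiftProd R g a b) :=
  (hg.comp (hR.iterate a)).mul (hg.comp (hR.iterate b))

theorem BddMeasurable.prod_iterate (hT : ∀ j, Measurable (T j)) (hf : ∀ j, BddMeasurable (f j))
    (n : ℕ) : BddMeasurable fun x => ∏ j, f j ((T j)^[n] x) :=
  .prod _ fun j => (hf j).comp ((hT j).iterate n)

theorem BddMeasurable.multipleAverage (hT : ∀ j, Measurable (T j))
    (hf : ∀ j, BddMeasurable (f j)) (N : ℕ) : BddMeasurable (multipleAverage T f N) :=
  .average (.prod_iterate hT hf) N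

variable {μ : Measure X} [IsProbabilityMeasure μ]

theorem BddMeasurable.integral_sq_le_one {F : X → ℝ} (hF : BddMeasurable F)
    (hF₁ : ∀ x, |F x| ≤ 1) : ∫ x, F x ^ 2 ∂μ ≤ 1 := by
  have hle : ∫ x, F x ^ 2 ∂μ ≤ ∫ _, 1 ∂μ :=
    integral_mono (hF.memLp μ 2).integrable_sq (integrable_const 1)
      fun x => (sq_le_one_iff_abs_le_one _).2 (hF₁ x)
  simpa only [integral_const, probReal_univ, one_smul] using hle

theorem integral_sq_multipleAverage_le (hT : ∀ j, Measurable (T j))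
    (hf : ∀ j, BddMeasurable (f j)) (hf₁ : ∀ j x, |f j x| ≤ 1) {H : ℕ} (hH : H ≠ 0) (N : ℕ) :
    ∫ x, multipleAverage T f N x ^ 2 ∂μ ≤
      doubleAverage H (fun a b => (N : ℝ)⁻¹ * ∑ k ∈ range N,
        ∫ x, ∏ j, shiftProd (T j) (f j) a b ((T j)^[k] x) ∂μ) + 4 * H / N := by
  have hprod := BddMeasurable.prod_iterate hT hf
  have hnorm : ∀ k, ‖(hprod k).toL2 μ‖ ≤ 1 := fun k => by
    rw [← sq_le_one_iff₀ (norm_nonneg _), BddMeasurable.norm_sq_toL2]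
    exact (hprod k).integral_sq_le_one fun x => abs_prod_le_one fun j => hf₁ j _
  have hvdC := norm_sq_average_le_doubleAverage hnorm hH N
  rw [← BddMeasurable.toL2_average μ hprod, BddMeasurable.norm_sq_toL2] at hvdC
  simp only [BddMeasurable.inner_toL2, ← prod_shiftProd_iterate] at hvdC
  exact hvdC

end MultipleAverages

section Reduction

/-- Commuting invertible measure preserving transformations `T j` such that `T i` is ergodic and
so are the quotients `T i / T j` for `j ≠ i`. The condition is inherited by the quotients
`T j / T p` for `p ≠ i`. -/
structure IsErgodicAt {X ι : Type*} [MeasurableSpace X] (μ : Measure X) (T : ι → Equiv.Perm X)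
    (i : ι) : Prop where
  commute : ∀ j k, Commute (T j) (T k)
  measurePreserving : ∀ j, MeasurePreserving (T j) μ μ
  measurable_inv : ∀ j, Measurable ⇑(T j)⁻¹
  ergodic : Ergodic (T i) μ
  ergodic_div : ∀ j, i ≠ j → Ergodic ⇑(T i / T j) μ

theorem commute_div_left {G : Type*} [Group G] {a b c : G} (hac : Commute a c)
    (hbc : Commute b c) : Commute (a / b) c := by
  rw [div_eq_mul_inv]
  exact hac.mul_left hbc.inv_left

theorem perm_div_iterate_iterate {X : Type*} {R S : Equiv.Perm X} (h : Commute R S) (k : ℕ)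
    (x : X) : (R / S)^[k] (S^[k] x) = R^[k] x := by
  have hpow : (R / S) ^ k * S ^ k = R ^ k := by
    rw [← (commute_div_left h (.refl S)).mul_pow, div_mul_cancel]
  rw [Equiv.Perm.iterate_eq_pow, Equiv.Perm.iterate_eq_pow, Equiv.Perm.iterate_eq_pow,
    ← Equiv.Perm.mul_apply, hpow]

variable {X : Type*} [MeasurableSpace X] {μ : Measure X}

theorem measurePreserving_perm_div {R S : Equiv.Perm X} (hR : MeasurePreserving R μ μ)
    (hS : MeasurePreserving S μ μ) (hSinv : Measurable ⇑S⁻¹) : MeasurePreserving ⇑(R / S) μ μ :=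
  hR.comp (MeasurePreserving.symm ⟨S, hS.measurable, hSinv⟩ hS)

theorem integral_comp_measurePreserving {G : X → ℝ} (hG : Measurable G) {S : X → X}
    (hS : MeasurePreserving S μ μ) : ∫ x, G (S x) ∂μ = ∫ x, G x ∂μ := by
  rw [← integral_map hS.aemeasurable hG.aestronglyMeasurable, hS.map_eq]

namespace IsErgodicAt

theorem div {ι κ : Type*} {T : ι → Equiv.Perm X} {σ : κ → ι} {q : κ}
    (h : IsErgodicAt μ T (σ q)) (hσ : Function.Injective σ) {p : ι} (hp : σ q ≠ p) :
    IsErgodicAt μ (fun k => T (σ k) / T p) q where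
  commute j k := commute_div_left (commute_div_left (h.commute _ _) (h.commute _ _)).symm
    (commute_div_left (h.commute _ _) (h.commute _ _)).symm
  measurePreserving k := measurePreserving_perm_div (h.measurePreserving _)
    (h.measurePreserving _) (h.measurable_inv _)
  measurable_inv k := by
    rw [inv_div]
    exact (h.measurePreserving _).measurable.comp (h.measurable_inv _)
  ergodic := h.ergodic_div p hp
  ergodic_div k hk := by
    rw [div_div_div_cancel_right]
    exact h.ergodic_div (σ k) (hσ.ne hk)

theorem measurable_div {ι : Type*} {T : ι → Equiv.Perm X} {i : ι} (h : IsErgodicAt μ T i)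
    (j p : ι) : Measurable ⇑(T j / T p) :=
  (h.measurePreserving j).measurable.comp (h.measurable_inv p)

variable {n : ℕ} {T : Fin (n + 1) → Equiv.Perm X} {i : Fin (n + 1)} {g : Fin (n + 1) → X → ℝ}

theorem integral_prod_iterate (h : IsErgodicAt μ T i) (hg : ∀ j, Measurable (g j))
    (p : Fin (n + 1)) (k : ℕ) :
    ∫ x, ∏ j, g j ((T j)^[k] x) ∂μ =
      ∫ x, g p x * ∏ j, g (p.succAbove j) ((T (p.succAbove j) / T p)^[k] x) ∂μ := by
  have hG : Measurable fun x =>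
      g p x * ∏ j, g (p.succAbove j) ((T (p.succAbove j) / T p)^[k] x) :=
    (hg p).mul (Finset.measurable_prod univ fun j _ =>
      (hg (p.succAbove j)).comp ((h.measurable_div (p.succAbove j) p).iterate k))
  rw [← integral_comp_measurePreserving hG ((h.measurePreserving p).iterate k)]
  simp only [Fin.prod_univ_succAbove _ p, perm_div_iterate_iterate (h.commute _ p)]

variable [IsProbabilityMeasure μ]

theorem average_integral_prod_iterate (h : IsErgodicAt μ T i) (hg : ∀ j, BddMeasurable (g j))
    (p : Fin (n + 1)) (N : ℕ) :
    (N : ℝ)⁻¹ * ∑ k ∈ range N, ∫ x, ∏ j, g j ((T j)^[k] x) ∂μ =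
      ∫ x, g p x * multipleAverage (fun j => ⇑(T (p.succAbove j) / T p))
        (fun j => g (p.succAbove j)) N x ∂μ := by
  simp only [h.integral_prod_iterate (fun j => (hg j).1) p]
  rw [← BddMeasurable.integral_average μ fun k => (hg p).mul
    (.prod_iterate (fun j => h.measurable_div (p.succAbove j) p) (fun j => hg (p.succAbove j)) k)]
  simp only [multipleAverage, ← mul_sum, mul_left_comm]

theorem sq_average_integral_prod_iterate_le (h : IsErgodicAt μ T i)
    (hg : ∀ j, BddMeasurable (g j)) {p : Fin (n + 1)} (hgp : ∀ x, |g p x| ≤ 1) (N : ℕ) :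
    ((N : ℝ)⁻¹ * ∑ k ∈ range N, ∫ x, ∏ j, g j ((T j)^[k] x) ∂μ) ^ 2 ≤
      ∫ x, multipleAverage (fun j => ⇑(T (p.succAbove j) / T p))
        (fun j => g (p.succAbove j)) N x ^ 2 ∂μ := by
  rw [h.average_integral_prod_iterate hg p]
  refine (BddMeasurable.sq_integral_mul_le μ (hg p) (.multipleAverage
    (fun j => h.measurable_div (p.succAbove j) p) (fun j => hg (p.succAbove j)) N)).trans ?_
  exact mul_le_of_le_one_left (integral_nonneg fun _ => sq_nonneg _)
    ((hg p).integral_sq_le_one hgp)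

variable {ν : ∀ k, Measure (HKBox X k)}

theorem tendsto_integral_sq_multipleAverage_fin_one {T : Fin 1 → Equiv.Perm X} {i : Fin 1}
    (h : IsErgodicAt μ T i) (hν : IsHKSeq μ (T i) ν) {f : Fin 1 → X → ℝ}
    (hf : ∀ j, BddMeasurable (f j)) :
    Tendsto (fun N => ∫ x, multipleAverage (fun j => T j) f N x ^ 2 ∂μ) atTop
      (nhds (boxIntegral ν 1 (f i))) := by
  obtain rfl : i = 0 := Subsingleton.elim _ _
  have hbirkhoff : ∀ N, multipleAverage (fun j => T j) f N = birkhoffAverage ℝ (T 0) (f 0) N :=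
    fun N => funext fun x => by simp [multipleAverage, birkhoffAverage, birkhoffSum]
  have hform : boxIntegral ν 1 (f 0) = invariantForm μ (T 0) (f 0) (f 0) := by
    rw [hν.boxIntegral_succ (hf 0), hν.1]
    rfl
  simpa only [hbirkhoff, hform] using
    tendsto_integral_sq_birkhoffAverage (h.measurePreserving 0) (hf 0)

/-- Van der Corput's inequality and the change of variables `x ↦ T p^(-k) x` remove the
transformation `T p` and replace `f i` by its products `shiftProd`, whose box integrals average to
the next box integral of `f i`. -/
theorem eventually_pow_integral_sq_multipleAverage_le (h : IsErgodicAt μ T i)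
    (hν : IsHKSeq μ (T i) ν) {f : Fin (n + 1) → X → ℝ} (hf : ∀ j, BddMeasurable (f j))
    (hf₁ : ∀ j x, |f j x| ≤ 1) {ε : ℝ} (hε : 0 < ε) :
    ∀ᶠ N in atTop, (∫ x, multipleAverage (fun j => T j) f N x ^ 2 ∂μ) ^ 2 ^ n ≤
      boxIntegral ν (n + 1) (f i) + ε := by
  induction n generalizing ε with
  | zero =>
    simp only [pow_zero, pow_one]
    exact (h.tendsto_integral_sq_multipleAverage_fin_one hν hf).eventually_le_const
      (lt_add_of_pos_right _ hε)
  | succ n ih =>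
    obtain ⟨p, hp⟩ := exists_ne i
    obtain ⟨q, rfl⟩ := Fin.exists_succAbove_eq hp.symm
    have hdiv := h.div Fin.succAbove_right_injective hp.symm
    have hνdiv := hν.of_commute h.ergodic hdiv.ergodic
      (Equiv.Perm.congr_fun (commute_div_left (.refl _) (h.commute _ _)).eq)
    have hshift : ∀ a b j, BddMeasurable (shiftProd (T j) (f j) a b) := fun a b j =>
      (hf j).shiftProd (h.measurePreserving j).measurable a b
    have hshift₁ : ∀ a b j x, |shiftProd (T j) (f j) a b x| ≤ 1 := fun a b j =>
      abs_shiftProd_le_one (hf₁ j) (T j) a b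
    refine eventually_pow_le_of_le_doubleAverage (even_two.pow_of_ne_zero n.succ_ne_zero)
      (by positivity) (fun N => integral_nonneg fun _ => sq_nonneg _)
      (hν.boxIntegral_succ_nonneg (hf _) _)
      (fun H hH N => integral_sq_multipleAverage_le (fun j => (h.measurePreserving j).measurable)
        hf hf₁ hH N)
      (fun a b δ hδ => ?_)
      (hν.tendsto_doubleAverage_boxIntegral (h.measurePreserving _) (hf _) (n + 1)) hε
    filter_upwards [ih hdiv hνdiv (fun j => hshift a b (p.succAbove j))
      (fun j => hshift₁ a b (p.succAbove j)) hδ] with N hN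
    rw [pow_succ', pow_mul]
    exact (pow_le_pow_left₀ (sq_nonneg _)
      (h.sq_average_integral_prod_iterate_le (hshift a b) (hshift₁ a b p) N) _).trans hN

theorem tendsto_integral_sq_multipleAverage_zero (h : IsErgodicAt μ T i)
    (hν : IsHKSeq μ (T i) ν) {f : Fin (n + 1) → X → ℝ} (hf : ∀ j, BddMeasurable (f j))
    (hf₁ : ∀ j x, |f j x| ≤ 1) (hzero : boxIntegral ν (n + 1) (f i) = 0) :
    Tendsto (fun N => ∫ x, multipleAverage (fun j => T j) f N x ^ 2 ∂μ) atTop (nhds 0) := by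
  refine tendsto_order.2 ⟨fun δ hδ => Eventually.of_forall fun N =>
    hδ.trans_le (integral_nonneg fun _ => sq_nonneg _), fun δ hδ => ?_⟩
  have hδn : 0 < δ ^ 2 ^ n / 2 := by positivity
  filter_upwards [h.eventually_pow_integral_sq_multipleAverage_le hν hf hf₁ hδn] with N hN
  rw [hzero, zero_add] at hN
  exact lt_of_pow_lt_pow_left₀ _ hδ.le (hN.trans_lt (half_lt_self (by positivity)))

theorem tendsto_eLpNorm_multipleAverage_zero (h : IsErgodicAt μ T i)
    (hν : IsHKSeq μ (T i) ν) {f : Fin (n + 1) → X → ℝ} (hf : ∀ j, BddMeasurable (f j))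
    (hzero : boxIntegral ν (n + 1) (f i) = 0) :
    Tendsto (fun N => eLpNorm (multipleAverage (fun j => T j) f N) 2 μ) atTop (nhds 0) := by
  choose C hC using fun j => (hf j).2
  set c : Fin (n + 1) → ℝ := fun j => (max (C j) 1)⁻¹
  have hc : ∏ j, c j ≠ 0 :=
    prod_ne_zero_iff.2 fun j _ => inv_ne_zero (zero_lt_one.trans_le (le_max_right _ _)).ne'
  have hg₁ : ∀ j x, |c j * f j x| ≤ 1 := fun j x => by
    have hpos : 0 < max (C j) 1 := zero_lt_one.trans_le (le_max_right _ _)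
    rw [abs_mul, abs_of_pos (inv_pos.2 hpos), inv_mul_le_one₀ hpos]
    exact (hC j x).trans (le_max_left _ _)
  have hscaled := h.tendsto_integral_sq_multipleAverage_zero hν (fun j => (hf j).const_mul (c j))
    hg₁ (by rw [boxIntegral_const_mul, hzero, mul_zero])
  simp only [multipleAverage_const_mul, mul_pow, integral_const_mul] at hscaled
  have hlim : Tendsto (fun N => ∫ x, multipleAverage (fun j => T j) f N x ^ 2 ∂μ) atTop (nhds 0) :=
    (tendsto_const_smul_iff₀ (pow_ne_zero 2 hc)).1
      (by simpa only [smul_eq_mul, mul_zero] using hscaled)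
  have hnorm : ∀ N, eLpNorm (multipleAverage (fun j => T j) f N) 2 μ =
      ENNReal.ofReal √(∫ x, multipleAverage (fun j => T j) f N x ^ 2 ∂μ) := fun N =>
    BddMeasurable.eLpNorm_two μ
      (.multipleAverage (fun j => (h.measurePreserving j).measurable) hf N)
  simpa only [hnorm, Real.sqrt_zero, ENNReal.ofReal_zero] using
    ENNReal.tendsto_ofReal hlim.sqrt

end IsErgodicAt

end Reduction

theorem HK_factor_is_characteristic_general {X : Type*} [MeasurableSpace X] {μ : Measure X}
    [IsProbabilityMeasure μ] {l : ℕ} {T : Fin l → Equiv.Perm X} {i : Fin l}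
    (h : IsErgodicAt μ T i) {ν : ∀ k, Measure (HKBox X k)} (hν : IsHKSeq μ (T i) ν)
    {f : Fin l → X → ℝ} (hf : ∀ j, BddMeasurable (f j)) (hzero : HKseminorm ν l (f i) = 0) :
    Tendsto (fun N => eLpNorm (multipleAverage (fun j => T j) f N) 2 μ) atTop (nhds 0) := by
  obtain ⟨n, rfl⟩ : ∃ n, l = n + 1 := Nat.exists_eq_succ_of_ne_zero i.pos.ne'
  exact h.tendsto_eLpNorm_multipleAverage_zero hν hf
    (hν.boxIntegral_eq_zero_of_HKseminorm_eq_zero (hf i) hzero)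

/-- Under the hypotheses of the main theorem, the Host–Kra factor `𝒵_{l-1}` is a
characteristic factor: if `𝔼(fᵢ | 𝒵_{l-1}) = 0` for some `i`, then the multiple ergodic
averages converge to `0` in `L²(μ)`. -/
theorem HK_factor_is_characteristic {X : Type*} [m : MeasurableSpace X]
    (μ : Measure X) [IsProbabilityMeasure μ] (l : ℕ) (hl : 1 ≤ l)
    (T Tinv : Fin l → X → X)
    (hTinvMeas : ∀ i, Measurable (Tinv i))
    (hinv : ∀ i, Function.LeftInverse (Tinv i) (T i) ∧ Function.RightInverse (Tinv i) (T i))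
    (hcomm : ∀ i j, T i ∘ T j = T j ∘ T i)
    (herg : ∀ i, Ergodic (T i) μ)
    (hergdiff : ∀ i j, i ≠ j → Ergodic (T i ∘ Tinv j) μ)
    (f : Fin l → X → ℝ) (hf : ∀ i, Measurable (f i)) (hbd : ∀ i, ∃ C, ∀ x, |f i x| ≤ C)
    (j : Fin l) (ν : ∀ k, Measure (HKBox X k)) (hν : IsHKSeq μ (T j) ν)
    -- `𝒵` is the common Host–Kra factor `𝒵_{l-1}`, characterized by the vanishing of the
    -- `l`-th seminorm, and invariant under all the `T i`:
    (𝒵 : MeasurableSpace X) (h𝒵 : 𝒵 ≤ m)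
    (h𝒵inv : ∀ i s, MeasurableSet[𝒵] s → MeasurableSet[𝒵] (T i ⁻¹' s))
    (hchar : ∀ g : X → ℝ, Measurable[m] g → (∃ C, ∀ x, |g x| ≤ C) →
      ((μ[g | 𝒵]) =ᵐ[μ] 0 ↔ (@HKseminorm X m ν l g) = 0))
    (i : Fin l) (hzero : (μ[f i | 𝒵]) =ᵐ[μ] 0) :
    Filter.Tendsto
      (fun N : ℕ => eLpNorm
        (fun x => (N : ℝ)⁻¹ * ∑ n ∈ Finset.range N, ∏ i, f i ((T i)^[n] x)) 2 μ)
      Filter.atTop (nhds 0) := by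
  -- Instance search would otherwise pick the factor `𝒵` as the σ-algebra of `X`.
  let _ := m
  let P : Fin l → Equiv.Perm X := fun j => ⟨T j, Tinv j, (hinv j).1, (hinv j).2⟩
  have hP : IsErgodicAt μ P i :=
    { commute := fun j k => Equiv.ext (congr_fun (hcomm j k))
      measurePreserving := fun j => (herg j).toMeasurePreserving
      measurable_inv := hTinvMeas
      ergodic := herg i
      ergodic_div := hergdiff i }
  exact HK_factor_is_characteristic_general hP
    (hν.of_commute (herg j) (herg i) (congr_fun (hcomm i j))) (fun j => ⟨hf j, hbd j⟩)
    ((hchar (f i) (hf i) (hbd i)).1 hzero)
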